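/- arXiv:0912.4747 — 6 statements merged into one kernel-verified Lean document; each statement's English description precedes it below -/
import Mathlib

section
/- For n ≥ 2, the number of permutations of length n that avoid the classical pattern 123 and end with a descent (π(n-1) > π(n)) equals C_n − C_{n−1}, where C_m is the m-th Catalan number. -/
/-- Number of occurrences of the classical pattern 1-2-3 in `π`. -/
def occ123 {n : ℕ} (π : Equiv.Perm (Fin n)) : ℕ :=
  (Finset.univ.filter (fun t : Fin n × Fin n × Fin n =>
    t.1 < t.2.1 ∧ t.2.1 < t.2.2 ∧ π t.1 < π t.2.1 ∧ π t.2.1 < π t.2.2)).card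

/-- Number of occurrences of the vincular pattern 1-23 in `π`. -/
def occ1_23 {n : ℕ} (π : Equiv.Perm (Fin n)) : ℕ :=
  (Finset.univ.filter (fun t : Fin n × Fin n × Fin n =>
    t.1 < t.2.1 ∧ t.2.1 < t.2.2 ∧ (t.2.2 : ℕ) = (t.2.1 : ℕ) + 1 ∧
      π t.1 < π t.2.1 ∧ π t.2.1 < π t.2.2)).card

/-- Number of occurrences of the vincular pattern 12-3 in `π`. -/
def occ12_3 {n : ℕ} (π : Equiv.Perm (Fin n)) : ℕ :=
  (Finset.univ.filter (fun t : Fin n × Fin n × Fin n =>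
    t.1 < t.2.1 ∧ t.2.1 < t.2.2 ∧ (t.2.1 : ℕ) = (t.1 : ℕ) + 1 ∧
      π t.1 < π t.2.1 ∧ π t.2.1 < π t.2.2)).card

open Finset in
/-- Number of descendants at depth `m` of a node labelled `h` in the generating tree. -/
def treeF : ℕ → ℕ → ℕ
  | 0, _ => 1
  | m + 1, h => treeF m (h + 1) + ∑ j ∈ Finset.range h, treeF m (j + 1)

theorem treeF_zero' (m : ℕ) : treeF (m + 1) 0 = treeF m 1 := by simp [treeF]

theorem treeF_succ' (m h : ℕ) : treeF (m + 1) (h + 1) = treeF (m + 1) h + treeF m (h + 2) := by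
  simp only [treeF, Finset.sum_range_succ]; ring

theorem treeF_closed (m : ℕ) : ∀ h, treeF (m + 1) h + (2 * m + 2 + h).choose m
    = (2 * m + 2 + h).choose (m + 1) := by
  induction m with
  | zero =>
    intro h
    simp [treeF]; ring
  | succ m ih =>
    intro h
    induction h with
    | zero =>
      rw [treeF_zero']
      have h1 := ih 1
      have h2 : (2 * m + 3).choose (m + 2) = (2 * m + 3).choose (m + 1) :=
        Nat.choose_symm_of_eq_add (by ring)
      have e1 : (2 * (m + 1) + 2 + 0).choose (m + 1) = (2 * m + 3).choose m
        + (2 * m + 3).choose (m + 1) := Nat.choose_succ_succ _ _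
      have e2 : (2 * (m + 1) + 2 + 0).choose (m + 1 + 1) = (2 * m + 3).choose (m + 1)
        + (2 * m + 3).choose (m + 2) := Nat.choose_succ_succ _ _
      have e3 : 2 * m + 2 + 1 = 2 * m + 3 := by ring
      rw [e3] at h1
      omega
    | succ h ihh =>
      rw [treeF_succ']
      have h1 := ih (h + 2)
      have e1 : (2 * (m + 1) + 2 + (h + 1)).choose (m + 1) = (2 * (m + 1) + 2 + h).choose m
        + (2 * (m + 1) + 2 + h).choose (m + 1) := Nat.choose_succ_succ _ _
      have e2 : (2 * (m + 1) + 2 + (h + 1)).choose (m + 1 + 1)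
        = (2 * (m + 1) + 2 + h).choose (m + 1)
        + (2 * (m + 1) + 2 + h).choose (m + 2) := Nat.choose_succ_succ _ _
      have e3 : 2 * m + 2 + (h + 2) = 2 * (m + 1) + 2 + h := by ring
      have e4 : m + 1 + 1 = m + 2 := rfl
      rw [e3] at h1
      rw [e4] at *
      omega

theorem treeF_catalan (n : ℕ) : treeF n 0 = catalan n := by
  cases n with
  | zero => simp [treeF]
  | succ m =>
    have h := treeF_closed m 0
    have hc := succ_mul_catalan_eq_centralBinom (m + 1)
    rw [Nat.centralBinom] at hc
    have h2 := Nat.choose_succ_right_eq (2 * m + 2) m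
    have e : 2 * (m + 1) = 2 * m + 2 := by ring
    have e2 : 2 * m + 2 - m = m + 2 := by omega
    rw [e] at hc
    rw [e2] at h2
    rw [add_zero] at h
    generalize (2 * m + 2).choose (m + 1) = a at *
    generalize (2 * m + 2).choose m = b at *
    have : (m + 2) * treeF (m + 1) 0 = (m + 2) * catalan (m + 1) := by
      have : (m + 1 + 1) * catalan (m + 1) = (m + 2) * catalan (m + 1) := rfl
      nlinarith
    exact Nat.eq_of_mul_eq_mul_left (by omega) this

/-- Avoiding 123. -/
def av {n : ℕ} (π : Equiv.Perm (Fin n)) : Prop :=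
  ∀ i j k, i < j → j < k → π i < π j → π j < π k → False

theorem occ_iff_av {n : ℕ} (π : Equiv.Perm (Fin n)) : occ123 π = 0 ↔ av π := by
  simp only [occ123, Finset.card_eq_zero, Finset.filter_eq_empty_iff, av]
  constructor
  · intro h i j k a b c d
    exact h (Finset.mem_univ (i, j, k)) ⟨a, b, c, d⟩
  · rintro h ⟨i, j, k⟩ _ ⟨a, b, c, d⟩
    exact h i j k a b c d

/-- Insert value `v` at position `p`. -/
def ins {n : ℕ} (p v : Fin (n + 1)) (σ : Equiv.Perm (Fin n)) : Equiv.Perm (Fin (n + 1)) :=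
  (finSuccEquiv' p).trans ((Equiv.optionCongr σ).trans (finSuccEquiv' v).symm)

theorem ins_at {n : ℕ} (p v : Fin (n + 1)) (σ : Equiv.Perm (Fin n)) : ins p v σ p = v := by
  simp [ins]

theorem ins_succAbove {n : ℕ} (p v : Fin (n + 1)) (σ : Equiv.Perm (Fin n)) (i : Fin n) :
    ins p v σ (p.succAbove i) = v.succAbove (σ i) := by
  simp [ins]

theorem ins_bij {n : ℕ} (p : Fin (n + 1)) :
    Function.Bijective (fun x : Fin (n + 1) × Equiv.Perm (Fin n) => ins p x.1 x.2) := by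
  rw [Fintype.bijective_iff_injective_and_card]
  constructor
  · rintro ⟨v, σ⟩ ⟨w, τ⟩ h
    simp only at h
    have h1 : v = w := by rw [← ins_at p v σ, h, ins_at]
    subst h1
    congr 1
    ext i
    have := ins_succAbove p v σ i
    rw [h, ins_succAbove] at this
    rw [Fin.succAbove_right_injective this]
  · simp [Fintype.card_perm, Nat.factorial_succ]

/-- `v` is at most every ascent top. -/
def okv {n : ℕ} (σ : Equiv.Perm (Fin n)) (v : ℕ) : Prop :=
  ∀ i j, i < j → σ i < σ j → v ≤ (σ j : ℕ)

open Classical in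
/-- The statistic: largest admissible value to append. -/
noncomputable def hst {n : ℕ} (σ : Equiv.Perm (Fin n)) : ℕ := Nat.findGreatest (okv σ) n

theorem hst_le {n : ℕ} (σ : Equiv.Perm (Fin n)) : hst σ ≤ n := by
  classical
  exact Nat.findGreatest_le _

theorem hst_iff {n : ℕ} (σ : Equiv.Perm (Fin n)) (v : ℕ) (hv : v ≤ n) : okv σ v ↔ v ≤ hst σ := by
  classical
  constructor
  · intro h
    exact Nat.le_findGreatest hv h
  · intro h i j a b
    have : okv σ (hst σ) := Nat.findGreatest_spec (P := okv σ) (m := 0) (Nat.zero_le _)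
      (fun _ _ _ _ => Nat.zero_le _)
    exact h.trans (this i j a b)

theorem hst_unique {n : ℕ} (σ : Equiv.Perm (Fin n)) (x : ℕ) (hx : x ≤ n)
    (h : ∀ v ≤ n, okv σ v ↔ v ≤ x) : hst σ = x := by
  apply le_antisymm
  · exact (h _ (hst_le σ)).1 ((hst_iff σ _ (hst_le σ)).2 le_rfl)
  · exact (hst_iff σ _ hx).1 ((h _ hx).2 le_rfl)

/-- Appending a last value. -/
abbrev app {n : ℕ} (v : Fin (n + 1)) (σ : Equiv.Perm (Fin n)) := ins (Fin.last n) v σ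

theorem app_last {n : ℕ} (v : Fin (n + 1)) (σ : Equiv.Perm (Fin n)) :
    app v σ (Fin.last n) = v := ins_at _ _ _

theorem app_castSucc {n : ℕ} (v : Fin (n + 1)) (σ : Equiv.Perm (Fin n)) (i : Fin n) :
    app v σ i.castSucc = v.succAbove (σ i) := by
  rw [← ins_succAbove (Fin.last n) v σ i, Fin.succAbove_last]

theorem sa_val {n : ℕ} (v : Fin (n + 1)) (x : Fin n) :
    ((v.succAbove x : Fin (n + 1)) : ℕ) = if (x : ℕ) < v then (x : ℕ) else x + 1 := by
  simp only [Fin.succAbove, Fin.lt_def, Fin.val_castSucc]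
  split_ifs <;> simp

theorem sa_lt_v {n : ℕ} (v : Fin (n + 1)) (x : Fin n) : v.succAbove x < v ↔ (x : ℕ) < v := by
  rw [Fin.lt_def, sa_val]; split_ifs <;> omega

theorem av_app {n : ℕ} (v : Fin (n + 1)) (σ : Equiv.Perm (Fin n)) :
    av (app v σ) ↔ av σ ∧ okv σ v := by
  constructor
  · intro h
    constructor
    · intro i j k a b c d
      apply h i.castSucc j.castSucc k.castSucc <;> simpa [app_castSucc]
    · intro i j a b
      by_contra hlt
      apply h i.castSucc j.castSucc (Fin.last n)
      · simpa
      · exact Fin.castSucc_lt_last _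
      · simpa [app_castSucc]
      · rw [app_castSucc, app_last, sa_lt_v]; omega
  · rintro ⟨h1, h2⟩ i j k a b c d
    induction j using Fin.lastCases with
    | last => exact absurd b (not_lt.2 (Fin.le_last _))
    | cast j =>
    induction i using Fin.lastCases with
    | last => exact absurd a (not_lt.2 (Fin.le_last _))
    | cast i =>
    rw [app_castSucc, app_castSucc, Fin.succAbove_lt_succAbove_iff] at c
    induction k using Fin.lastCases with
    | last =>
      rw [app_castSucc, app_last, sa_lt_v] at d
      have := h2 i j (by simpa using a) c
      omega
    | cast k =>
      rw [app_castSucc, app_castSucc, Fin.succAbove_lt_succAbove_iff] at d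
      exact h1 i j k (by simpa using a) (by simpa using b) c d

theorem okv_app {n : ℕ} (v : Fin (n + 1)) (σ : Equiv.Perm (Fin n)) (w : ℕ) :
    okv (app v σ) w ↔ (∀ i j, i < j → σ i < σ j → w ≤ (v.succAbove (σ j) : ℕ)) ∧
      (0 < (v : ℕ) → w ≤ v) := by
  constructor
  · intro h
    constructor
    · intro i j a b
      have := h i.castSucc j.castSucc (by simpa) (by simpa [app_castSucc])
      rwa [app_castSucc] at this
    · intro hv
      have hn : 0 < n := by have := v.2; omega
      have := h (σ.symm ⟨0, hn⟩).castSucc (Fin.last n) (Fin.castSucc_lt_last _) (by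
        rw [app_castSucc, app_last, sa_lt_v]; simpa using hv)
      rwa [app_last] at this
  · rintro ⟨h1, h2⟩ i j a b
    induction i using Fin.lastCases with
    | last => exact absurd a (not_lt.2 (Fin.le_last _))
    | cast i =>
    induction j using Fin.lastCases with
    | last =>
      rw [app_castSucc, app_last, sa_lt_v] at b
      rw [app_last]
      exact h2 (by omega)
    | cast j =>
      rw [app_castSucc, app_castSucc, Fin.succAbove_lt_succAbove_iff] at b
      rw [app_castSucc]
      exact h1 i j (by simpa using a) b

theorem hst_app {n : ℕ} (v : Fin (n + 1)) (σ : Equiv.Perm (Fin n)) (hv : (v : ℕ) ≤ hst σ) :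
    hst (app v σ) = if (v : ℕ) = 0 then hst σ + 1 else (v : ℕ) := by
  have hle := hst_le σ
  have hok := (hst_iff σ _ hle).2 le_rfl
  split_ifs with h0
  · apply hst_unique _ _ (by omega)
    intro w hw
    rw [okv_app]
    simp only [sa_val, h0]
    constructor
    · rintro ⟨h, -⟩
      rcases w with _ | w
      · omega
      · have := (hst_iff σ w (by omega)).1 (fun i j a b => by
          have := h i j a b
          simp at this; omega)
        omega
    · intro h
      refine ⟨fun i j a b => ?_, by omega⟩
      have := hok i j a b
      simp; omega
  · apply hst_unique _ _ (by omega)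
    intro w hw
    rw [okv_app]
    constructor
    · rintro ⟨-, h⟩
      exact h (by omega)
    · intro h
      refine ⟨fun i j a b => ?_, fun _ => h⟩
      have := hok i j a b
      rw [sa_val]
      split_ifs <;> omega

open Classical in
theorem sum_step (n m : ℕ) :
    (∑ π : Equiv.Perm (Fin (n + 1)), if av π then treeF m (hst π) else 0)
      = ∑ σ : Equiv.Perm (Fin n), if av σ then treeF (m + 1) (hst σ) else 0 := by
  rw [← (ins_bij (Fin.last n)).sum_comp, Fintype.sum_prod_type_right]
  apply Finset.sum_congr rfl
  intro σ _
  by_cases hσ : av σ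
  · have hle := hst_le σ
    have : ∀ v : Fin (n + 1), (if av (ins (Fin.last n) v σ) then
        treeF m (hst (ins (Fin.last n) v σ)) else 0) =
        (fun x : ℕ => if x ≤ hst σ then treeF m (if x = 0 then hst σ + 1 else x) else 0) v := by
      intro v
      have hv := av_app v σ
      rw [hst_iff σ v (by omega)] at hv
      simp only [hv, hσ, true_and]
      split_ifs with h1 h2 <;> (try rfl) <;> rw [hst_app v σ h1] <;> simp [*]
    simp only [this, hσ, if_true]
    rw [Fin.sum_univ_eq_sum_range
      (fun x : ℕ => if x ≤ hst σ then treeF m (if x = 0 then hst σ + 1 else x) else 0)]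
    rw [← Finset.sum_filter]
    have : (Finset.range (n + 1)).filter (fun x => x ≤ hst σ) = Finset.range (hst σ + 1) := by
      ext x; simp; omega
    rw [this, Finset.sum_range_succ']
    simp [treeF, add_comm]
  · have : ∀ v : Fin (n + 1), ¬ av (ins (Fin.last n) v σ) := fun v h =>
      hσ ((av_app v σ).1 h).1
    simp [this, hσ]

open Classical in
theorem sum_shift (n : ℕ) : ∀ m,
    (∑ π : Equiv.Perm (Fin n), if av π then treeF m (hst π) else 0) = treeF (m + n) 0 := by
  induction n with
  | zero =>
    intro m
    have h1 : ∀ π : Equiv.Perm (Fin 0), av π := fun π i => i.elim0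
    have h2 : ∀ π : Equiv.Perm (Fin 0), hst π = 0 := fun π => Nat.le_zero.1 (hst_le π)
    simp [h1, h2]
  | succ n ih =>
    intro m
    rw [sum_step, ih]
    congr 1; ring

theorem av_ncard (n : ℕ) : {π : Equiv.Perm (Fin n) | av π}.ncard = catalan n := by
  classical
  have h := sum_shift n 0
  simp only [treeF, zero_add, treeF_catalan] at h
  rw [← h, Set.ncard_eq_toFinset_card', ← Finset.sum_filter, Finset.sum_const]
  simp

/-- Avoiders ending with an ascent. -/
theorem asc_ncard (m : ℕ) :
    {π : Equiv.Perm (Fin (m + 2)) | av π ∧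
      π ⟨m, by omega⟩ < π ⟨m + 1, by omega⟩}.ncard = catalan (m + 1) := by
  rw [← av_ncard]
  have himg : {π : Equiv.Perm (Fin (m + 2)) | av π ∧
      π ⟨m, by omega⟩ < π ⟨m + 1, by omega⟩} =
      (fun σ : Equiv.Perm (Fin (m + 1)) => ins ⟨m, by omega⟩ 0 σ) '' {σ | av σ} := by
    ext π
    obtain ⟨⟨v, σ⟩, rfl⟩ := (ins_bij (⟨m, by omega⟩ : Fin (m + 2))).2 π
    simp only [Set.mem_ofPred_eq, Set.mem_image]
    set p : Fin (m + 2) := ⟨m, by omega⟩ with hp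
    have hl : (⟨m + 1, by omega⟩ : Fin (m + 2)) = p.succAbove (Fin.last m) := by
      apply Fin.ext; rw [sa_val]; simp [hp]
    constructor
    · rintro ⟨h, hlt⟩
      have hv : v = 0 := by
        by_contra hv
        obtain ⟨q, hq⟩ := (ins p v σ).surjective 0
        have hqp : q ≠ p := by
          rintro rfl
          rw [ins_at] at hq
          exact hv hq
        have hql : q ≠ ⟨m + 1, by omega⟩ := by
          intro hqe
          rw [← hqe, hq] at hlt
          exact absurd hlt (Fin.not_lt_zero _)
        refine h q p ⟨m + 1, by omega⟩ ?_ ?_ ?_ hlt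
        · have := q.2
          have h1 : (q : ℕ) ≠ m := fun h => hqp (Fin.ext h)
          have h2 : (q : ℕ) ≠ m + 1 := fun h => hql (Fin.ext h)
          rw [Fin.lt_def]; simp only [hp]; omega
        · rw [Fin.lt_def]; simp [hp]
        · rw [hq, ins_at]; exact Fin.pos_iff_ne_zero.2 hv
      subst hv
      refine ⟨σ, ?_, rfl⟩
      intro i j k a b c d
      apply h (p.succAbove i) (p.succAbove j) (p.succAbove k) <;>
        simpa [ins_succAbove, Fin.succAbove_lt_succAbove_iff]
    · rintro ⟨τ, hτ, he⟩
      rw [← he]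
      refine ⟨?_, ?_⟩
      · intro i j k a b c d
        rcases Fin.eq_self_or_eq_succAbove p j with rfl | ⟨j, rfl⟩
        · rw [ins_at] at c; exact absurd c (Fin.not_lt_zero _)
        rcases Fin.eq_self_or_eq_succAbove p k with rfl | ⟨k, rfl⟩
        · rw [ins_at] at d; exact absurd d (Fin.not_lt_zero _)
        rcases Fin.eq_self_or_eq_succAbove p i with rfl | ⟨i, rfl⟩
        · have := k.2
          rw [Fin.lt_def] at a b
          rw [sa_val] at a b
          rw [sa_val] at b
          simp only [hp] at a b
          split_ifs at a b <;> omega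
        rw [ins_succAbove, ins_succAbove, Fin.succAbove_lt_succAbove_iff] at c d
        rw [Fin.succAbove_lt_succAbove_iff] at a b
        exact hτ i j k a b c d
      · rw [hl, ins_at, ins_succAbove]
        simp
  rw [himg, Set.ncard_image_of_injective]
  intro σ τ h
  have := (ins_bij (⟨m, by omega⟩ : Fin (m + 2))).1 (a₁ := (0, σ)) (a₂ := (0, τ)) h
  exact (Prod.mk.inj this).2

/-- The number of 123-avoiding permutations of length `n ≥ 2` ending with a
descent is `C_n - C_(n-1)`. -/
theorem avoid123_descent_count (n : ℕ) (hn : 2 ≤ n) :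
    {π : Equiv.Perm (Fin n) | occ123 π = 0 ∧
        π ⟨n - 1, by omega⟩ < π ⟨n - 2, by omega⟩}.ncard
      = catalan n - catalan (n - 1) := by
  obtain ⟨m, rfl⟩ : ∃ m, n = m + 2 := ⟨n - 2, by omega⟩
  have e : m + 2 - 1 = m + 1 := rfl
  have e2 : m + 2 - 2 = m := rfl
  simp only [occ_iff_av, e, e2]
  rw [← av_ncard (m + 2), ← asc_ncard m, ← Set.ncard_sdiff (fun π h => h.1) (Set.toFinite _)]
  congr 1
  ext π
  simp only [Set.mem_sdiff, Set.mem_ofPred_eq, not_and, not_lt]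
  constructor
  · rintro ⟨h1, h2⟩
    exact ⟨h1, fun _ => h2.le⟩
  · rintro ⟨h1, h2⟩
    refine ⟨h1, lt_of_le_of_ne (h2 h1) ?_⟩
    intro h
    have := π.injective h
    simp at this
end

section
/- A permutation π that avoids the classical pattern 123 fails to end with a descent if and only if n = 1 or the value 1 occupies position n−1 in π. -/
/-- A 123-avoiding permutation fails to end with a descent iff `n = 1` or the
value `1` (i.e. `0 : Fin n`) occupies position `n - 1` (the second-to-last,
`0`-indexed `n - 2`). -/
theorem avoid123_no_descent_iff (n : ℕ) (hn : 1 ≤ n) (π : Equiv.Perm (Fin n))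
    (havoid : occ123 π = 0) :
    ¬ (π ⟨n - 1, by omega⟩ < π ⟨n - 2, by omega⟩) ↔
      n = 1 ∨ π ⟨n - 2, by omega⟩ = ⟨0, by omega⟩ := by
  have hav : ∀ i j k : Fin n, i < j → j < k → π i < π j → π j < π k → False := by
    intro i j k h1 h2 h3 h4
    unfold occ123 at havoid
    rw [Finset.card_eq_zero, Finset.filter_eq_empty_iff] at havoid
    exact havoid (Finset.mem_univ (i, j, k)) ⟨h1, h2, h3, h4⟩
  constructor
  · intro h
    by_cases h1 : n = 1
    · exact Or.inl h1
    right
    by_contra h0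
    have hk : π (π.symm ⟨0, by omega⟩) = ⟨0, by omega⟩ := π.apply_symm_apply _
    generalize π.symm ⟨0, by omega⟩ = k at hk
    have hne : π ⟨n - 2, by omega⟩ ≠ π ⟨n - 1, by omega⟩ := by
      intro he
      have := congrArg Fin.val (π.injective he)
      simp only at this
      omega
    have hlt : π ⟨n - 2, by omega⟩ < π ⟨n - 1, by omega⟩ := lt_of_le_of_ne (not_lt.mp h) hne
    have hk2 : (k : ℕ) ≠ n - 2 := by
      intro he
      have : k = ⟨n - 2, by omega⟩ := Fin.ext he
      exact h0 (this ▸ hk)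
    have hk1 : (k : ℕ) ≠ n - 1 := by
      intro he
      have : k = ⟨n - 1, by omega⟩ := Fin.ext he
      rw [← this, hk, Fin.lt_def] at hlt
      exact absurd hlt (Nat.not_lt_zero _)
    refine hav k ⟨n - 2, by omega⟩ ⟨n - 1, by omega⟩ ?_ ?_ ?_ hlt
    · rw [Fin.lt_def]
      have := k.isLt
      simp only
      omega
    · rw [Fin.lt_def]
      simp only
      omega
    · rw [hk, Fin.lt_def]
      exact Nat.pos_of_ne_zero fun he => h0 (Fin.ext he)
  · rintro (h | h)
    · subst h
      exact lt_irrefl _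
    · rw [h, Fin.lt_def]
      exact Nat.not_lt_zero _
end

section
/- For n ≥ 3, the number of permutations of length n containing exactly one occurrence of the vincular pattern 1-23 and exactly one occurrence of the classical pattern 1-2-3 equals (5/(n+2)) * C(2n-2, n+1). -/
namespace S123

/-- `(i,j,k)` is an occurrence of 1-2-3. -/
def Occ {n : ℕ} (s : Equiv.Perm (Fin n)) (i j k : Fin n) : Prop :=
  i < j ∧ j < k ∧ s i < s j ∧ s j < s k

/-- Values below `u` appear in decreasing order. -/
def Thr {n : ℕ} (s : Equiv.Perm (Fin n)) (u : ℕ) : Prop :=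
  ∀ i j, i < j → s i < s j → u ≤ (s j : ℕ)

def Av {n : ℕ} (s : Equiv.Perm (Fin n)) : Prop := ∀ i j k, ¬ Occ s i j k

def U {n : ℕ} (s : Equiv.Perm (Fin n)) : Prop :=
  ∃ i j k, Occ s i j k ∧ (k : ℕ) = j + 1 ∧
    ∀ i' j' k', Occ s i' j' k' → i' = i ∧ j' = j ∧ k' = k

def A {n : ℕ} (s : Equiv.Perm (Fin n)) (u : ℕ) : Prop := Av s ∧ Thr s u

def B {n : ℕ} (s : Equiv.Perm (Fin n)) (u : ℕ) : Prop := U s ∧ Thr s u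

def D {n : ℕ} (s : Equiv.Perm (Fin n)) (z : ℕ) : Prop :=
  Av s ∧ ∃ i j, i < j ∧ s i < s j ∧ (s j : ℕ) < z ∧ (j : ℕ) + 1 = n ∧
    ∀ i' j', i' < j' → s i' < s j' → (s j' : ℕ) < z → i' = i ∧ j' = j

/-- Append a last entry `z`. -/
def sn {n : ℕ} (z : Fin (n+1)) (s : Equiv.Perm (Fin n)) : Equiv.Perm (Fin (n+1)) :=
  (finSuccEquiv' (Fin.last n)).trans ((Equiv.optionCongr s).trans (finSuccEquiv' z).symm)

@[simp] lemma sn_last {n : ℕ} (z : Fin (n+1)) (s : Equiv.Perm (Fin n)) :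
    sn z s (Fin.last n) = z := by
  simp [sn]

@[simp] lemma sn_cast {n : ℕ} (z : Fin (n+1)) (s : Equiv.Perm (Fin n)) (i : Fin n) :
    sn z s i.castSucc = z.succAbove (s i) := by
  have : finSuccEquiv' (Fin.last n) i.castSucc = some i := by
    rw [← Fin.succAbove_last_apply, finSuccEquiv'_succAbove]
  simp [sn, this]

lemma sn_bij (n : ℕ) : Function.Bijective
    (fun p : Fin (n+1) × Equiv.Perm (Fin n) => sn p.1 p.2) := by
  rw [Fintype.bijective_iff_injective_and_card]
  constructor
  · rintro ⟨z, s⟩ ⟨w, t⟩ h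
    simp only at h
    have h1 : z = w := by
      have := congrArg (fun f => f (Fin.last n)) h
      simpa using this
    subst h1
    have h2 : s = t := by
      ext i : 1
      have := congrArg (fun f => f i.castSucc) h
      simpa using this
    rw [h2]
  · simp [Fintype.card_perm, Nat.factorial_succ]

lemma val_sa {n : ℕ} (z : Fin (n+1)) (x : Fin n) :
    ((x : ℕ) < z ∧ (z.succAbove x : ℕ) = x) ∨ ((z : ℕ) ≤ x ∧ (z.succAbove x : ℕ) = x + 1) := by
  by_cases h : (x : ℕ) < z
  · left; refine ⟨h, ?_⟩
    rw [Fin.succAbove_of_castSucc_lt]; · simp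
    exact h
  · right; push Not at h; refine ⟨h, ?_⟩
    rw [Fin.succAbove_of_le_castSucc]; · simp
    exact h

lemma sa_lt {n : ℕ} (z : Fin (n+1)) (x : Fin n) : z.succAbove x < z ↔ (x : ℕ) < z := by
  rw [Fin.lt_def]; rcases val_sa z x with h | h <;> omega

lemma occ_cast {n : ℕ} (z : Fin (n+1)) (s : Equiv.Perm (Fin n)) (i j k : Fin n) :
    Occ (sn z s) i.castSucc j.castSucc k.castSucc ↔ Occ s i j k := by
  simp [Occ]

lemma occ_last {n : ℕ} (z : Fin (n+1)) (s : Equiv.Perm (Fin n)) (i j : Fin n) :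
    Occ (sn z s) i.castSucc j.castSucc (Fin.last n) ↔ i < j ∧ s i < s j ∧ (s j : ℕ) < z := by
  simp [Occ, sa_lt, Fin.castSucc_lt_last]

lemma occ_mid {n : ℕ} (s : Equiv.Perm (Fin (n+1))) {i j k : Fin (n+1)} (h : Occ s i j k) :
    ∃ i' j' : Fin n, i = i'.castSucc ∧ j = j'.castSucc := by
  obtain ⟨h1, h2, -, -⟩ := h
  have hj : j ≠ Fin.last n := (lt_of_lt_of_le h2 (Fin.le_last k)).ne
  have hi : i ≠ Fin.last n := (lt_of_lt_of_le (h1.trans h2) (Fin.le_last k)).ne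
  exact ⟨i.castPred hi, j.castPred hj, by simp, by simp⟩

lemma last_or {n : ℕ} (k : Fin (n+1)) : k = Fin.last n ∨ ∃ k' : Fin n, k = k'.castSucc := by
  by_cases h : k = Fin.last n
  · exact Or.inl h
  · exact Or.inr ⟨k.castPred h, by simp⟩

lemma av_sn {n : ℕ} (z : Fin (n+1)) (s : Equiv.Perm (Fin n)) :
    Av (sn z s) ↔ Av s ∧ Thr s z := by
  constructor
  · intro h
    refine ⟨fun i j k ho => h _ _ _ ((occ_cast z s i j k).2 ho), fun i j hij hs => ?_⟩
    by_contra hc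
    exact h _ _ _ ((occ_last z s i j).2 ⟨hij, hs, by omega⟩)
  · rintro ⟨h1, h2⟩ i j k ho
    obtain ⟨i, j, rfl, rfl⟩ := occ_mid _ ho
    rcases last_or k with rfl | ⟨k, rfl⟩
    · rw [occ_last] at ho
      have := h2 i j ho.1 ho.2.1
      omega
    · exact h1 _ _ _ ((occ_cast z s i j k).1 ho)

lemma thr_sn {n : ℕ} (z : Fin (n+1)) (s : Equiv.Perm (Fin n)) (u : ℕ) :
    Thr (sn z s) u ↔ (∀ i j, i < j → s i < s j → u ≤ (z.succAbove (s j) : ℕ)) ∧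
      ((z : ℕ) = 0 ∨ u ≤ z) := by
  constructor
  · intro h
    refine ⟨fun i j hij hs => ?_, ?_⟩
    · have := h i.castSucc j.castSucc (by simpa using hij) (by simpa using hs)
      simpa using this
    · by_cases hz : (z : ℕ) = 0
      · exact Or.inl hz
      right
      have hn : 0 < n := by have := z.2; omega
      have := h (s.symm ⟨0, hn⟩).castSucc (Fin.last n) (Fin.castSucc_lt_last _)
        (by simp only [sn_cast, sn_last, sa_lt, Equiv.apply_symm_apply]; omega)
      simpa using this
  · rintro ⟨h1, h2⟩ i j hij hs
    have hi : i ≠ Fin.last n := (lt_of_lt_of_le hij (Fin.le_last j)).ne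
    obtain ⟨i, rfl⟩ : ∃ i' : Fin n, i = i'.castSucc := ⟨i.castPred hi, by simp⟩
    rcases last_or j with rfl | ⟨j, rfl⟩
    · simp only [sn_cast, sn_last, sa_lt] at hs ⊢
      omega
    · simp only [sn_cast] at hs ⊢
      exact h1 i j (by simpa using hij) (by simpa using hs)

/-- Given that values below `z` are decreasing. -/
lemma thr_sn' {n : ℕ} (z : Fin (n+1)) (s : Equiv.Perm (Fin n)) (u : ℕ) :
    (Thr s z ∧ Thr (sn z s) u) ↔ (u ≤ z ∧ Thr s z) ∨ ((z : ℕ) < u ∧ (z : ℕ) = 0 ∧ Thr s (u-1)) := by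
  rw [thr_sn]
  constructor
  · rintro ⟨h1, h2, h3⟩
    by_cases hu : u ≤ z
    · exact Or.inl ⟨hu, h1⟩
    · refine Or.inr ⟨by omega, by omega, fun i j hij hs => ?_⟩
      have := h2 i j hij hs
      rcases val_sa z (s j) with h | h <;> omega
  · rintro (⟨hu, h⟩ | ⟨hu, hz, h⟩)
    · refine ⟨h, fun i j hij hs => ?_, Or.inr hu⟩
      have := h i j hij hs
      rcases val_sa z (s j) with h | h <;> omega
    · refine ⟨fun i j hij hs => by omega, fun i j hij hs => ?_, Or.inl hz⟩
      have := h i j hij hs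
      rcases val_sa z (s j) with h | h <;> omega

lemma stepA {n : ℕ} (z : Fin (n+1)) (s : Equiv.Perm (Fin n)) (u : ℕ) :
    A (sn z s) u ↔ (u ≤ z ∧ A s z) ∨ ((z : ℕ) < u ∧ (z : ℕ) = 0 ∧ A s (u-1)) := by
  have := thr_sn' z s u
  unfold A
  rw [av_sn]
  tauto

lemma u_sn {n : ℕ} (z : Fin (n+1)) (s : Equiv.Perm (Fin n)) :
    U (sn z s) ↔ (U s ∧ Thr s z) ∨ D s z := by
  constructor
  · rintro ⟨i, j, k, ho, hk, hu⟩
    obtain ⟨i, j, rfl, rfl⟩ := occ_mid _ ho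
    rcases last_or k with rfl | ⟨k, rfl⟩
    · right
      rw [occ_last] at ho
      refine ⟨fun i' j' k' ho' => ?_, i, j, ho.1, ho.2.1, ho.2.2, ?_, fun i' j' h1 h2 h3 => ?_⟩
      · have := (hu _ _ _ ((occ_cast z s i' j' k').2 ho')).2.2
        exact absurd this (Fin.castSucc_lt_last _).ne
      · simp at hk; omega
      · have := hu _ _ _ ((occ_last z s i' j').2 ⟨h1, h2, h3⟩)
        simpa using this
    · left
      rw [occ_cast] at ho
      refine ⟨⟨i, j, k, ho, by simpa using hk, fun i' j' k' ho' => ?_⟩, fun i' j' h1 h2 => ?_⟩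
      · have := hu _ _ _ ((occ_cast z s i' j' k').2 ho')
        simpa using this
      · by_contra hc
        have := (hu _ _ _ ((occ_last z s i' j').2 ⟨h1, h2, by omega⟩)).2.2
        exact absurd this (Fin.castSucc_lt_last _).ne'
  · rintro (⟨⟨i, j, k, ho, hk, hu⟩, ht⟩ | ⟨ha, i, j, h1, h2, h3, hj, hu⟩)
    · refine ⟨i.castSucc, j.castSucc, k.castSucc, (occ_cast z s i j k).2 ho, by simpa using hk, ?_⟩
      intro i' j' k' ho'
      obtain ⟨i', j', rfl, rfl⟩ := occ_mid _ ho'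
      rcases last_or k' with rfl | ⟨k', rfl⟩
      · rw [occ_last] at ho'
        have := ht _ _ ho'.1 ho'.2.1
        omega
      · have := hu _ _ _ ((occ_cast z s i' j' k').1 ho')
        simpa using this
    · refine ⟨i.castSucc, j.castSucc, Fin.last n, (occ_last z s i j).2 ⟨h1, h2, h3⟩,
        by simp [hj], ?_⟩
      intro i' j' k' ho'
      obtain ⟨i', j', rfl, rfl⟩ := occ_mid _ ho'
      rcases last_or k' with rfl | ⟨k', rfl⟩
      · rw [occ_last] at ho'
        have := hu _ _ ho'.1 ho'.2.1 ho'.2.2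
        simpa using this
      · exact absurd ((occ_cast z s i' j' k').1 ho') (ha _ _ _)

lemma stepD {n : ℕ} (b : Fin (n+1)) (r : Equiv.Perm (Fin n)) (z : ℕ) :
    D (sn b r) z ↔ (b : ℕ) = 1 ∧ 2 ≤ z ∧ A r (z-1) := by
  constructor
  · rintro ⟨ha, i, j, hij, hs, hz, hj, hu⟩
    obtain rfl : j = Fin.last n := by ext; simp; omega
    rw [av_sn] at ha
    obtain ⟨i, rfl⟩ : ∃ i' : Fin n, i = i'.castSucc := ⟨i.castPred hij.ne, by simp⟩
    simp only [sn_last, sn_cast, sa_lt] at hs hz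
    have key : ∀ x : Fin n, (x : ℕ) < b → r.symm x = i := by
      intro x hx
      have := (hu (r.symm x).castSucc (Fin.last n) (Fin.castSucc_lt_last _)
        (by simpa [sa_lt] using hx) (by simpa using hz)).1
      simpa using this
    have hb : (b : ℕ) = 1 := by
      by_contra hb
      have hbn := b.2
      have h0 := key ⟨0, by omega⟩ (by change 0 < (b : ℕ); omega)
      have h1 := key ⟨1, by omega⟩ (by simp; omega)
      have := r.symm.injective (h0.trans h1.symm)
      simp at this
    refine ⟨hb, by omega, ha.1, fun i' j' h1 h2 => ?_⟩
    by_contra hc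
    have hv : (b.succAbove (r j') : ℕ) < z := by
      rcases val_sa b (r j') with h | h <;> omega
    have := (hu i'.castSucc j'.castSucc (by simpa using h1) (by simpa using h2)
      (by simpa using hv)).2
    exact absurd this (Fin.castSucc_lt_last _).ne
  · rintro ⟨hb, hz, ha, ht⟩
    have hn : 0 < n := by have := b.2; omega
    refine ⟨(av_sn b r).2 ⟨ha, fun i j _ hs => ?_⟩, (r.symm ⟨0, hn⟩).castSucc, Fin.last n,
      Fin.castSucc_lt_last _, by simp only [sn_cast, sn_last, sa_lt, Equiv.apply_symm_apply]; omega, by simp; omega, by simp, ?_⟩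
    · rw [Fin.lt_def] at hs; omega
    · intro i' j' h1 h2 h3
      have hi : i' ≠ Fin.last n := (lt_of_lt_of_le h1 (Fin.le_last j')).ne
      obtain ⟨i, rfl⟩ : ∃ i : Fin n, i' = i.castSucc := ⟨i'.castPred hi, by simp⟩
      rcases last_or j' with rfl | ⟨j, rfl⟩
      · simp only [sn_cast, sn_last, sa_lt] at h2
        refine ⟨?_, rfl⟩
        congr 1
        rw [Equiv.eq_symm_apply]
        ext; simp; omega
      · exfalso
        simp only [sn_cast] at h2 h3
        have h2' : r i < r j := by simpa using h2
        have := ht i j (by simpa using h1) h2'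
        rw [Fin.lt_def] at h2'
        rcases val_sa b (r j) with h | h <;> omega

lemma D_one {n : ℕ} (s : Equiv.Perm (Fin n)) (z : ℕ) (h : D s z) :
    2 ≤ z ∧ ∃ i j, i < j ∧ s i < s j ∧ (s j : ℕ) = 1 := by
  cases n with
  | zero => obtain ⟨_, i, _⟩ := h; exact i.elim0
  | succ n =>
    obtain ⟨⟨b, r⟩, rfl⟩ := (sn_bij n).2 s
    simp only at h ⊢
    obtain ⟨hb, hz, -⟩ := (stepD b r z).1 h
    have hn : 0 < n := by have := b.2; omega
    refine ⟨hz, (r.symm ⟨0, hn⟩).castSucc, Fin.last n, Fin.castSucc_lt_last _, ?_, ?_⟩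
    · simp only [sn_cast, sn_last, sa_lt, Equiv.apply_symm_apply]; omega
    · simpa using hb

lemma stepB {n : ℕ} (z : Fin (n+1)) (s : Equiv.Perm (Fin n)) (u : ℕ) :
    B (sn z s) u ↔ ((u ≤ z ∧ B s z) ∨ ((z : ℕ) < u ∧ (z : ℕ) = 0 ∧ B s (u-1))) ∨
      (u ≤ 1 ∧ D s z) := by
  have h1 := thr_sn' z s u
  have h2 : D s z → (Thr (sn z s) u ↔ u ≤ 1) := by
    intro hD
    obtain ⟨hz, i, j, hij, hs, hj⟩ := D_one s z hD
    constructor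
    · intro ht
      have := ht i.castSucc j.castSucc (by simpa using hij) (by simpa using hs)
      simp only [sn_cast] at this
      rcases val_sa z (s j) with h | h <;> omega
    · intro hu i j _ hs
      rw [Fin.lt_def] at hs; omega
  unfold B
  rw [u_sn]
  tauto

lemma U_not_D {n : ℕ} (s : Equiv.Perm (Fin n)) (z : ℕ) (h : U s) : ¬ D s z := by
  rintro ⟨ha, -⟩
  obtain ⟨i, j, k, ho, -⟩ := h
  exact ha _ _ _ ho

lemma occ_iff {n : ℕ} (s : Equiv.Perm (Fin n)) : (occ1_23 s = 1 ∧ occ123 s = 1) ↔ U s := by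
  unfold occ1_23 occ123
  rw [Finset.card_eq_one, Finset.card_eq_one]
  constructor
  · rintro ⟨⟨⟨i, j, k⟩, h1⟩, ⟨t, h2⟩⟩
    have m1 := Finset.mem_singleton_self (i, j, k)
    rw [← h1] at m1
    simp only [Finset.mem_filter, Finset.mem_univ, true_and] at m1
    have all : ∀ i' j' k', Occ s i' j' k' → (i', j', k') = t := by
      intro i' j' k' ho
      rw [← Finset.mem_singleton, ← h2]
      simpa [Occ] using ho
    have ho : Occ s i j k := ⟨m1.1, m1.2.1, m1.2.2.2⟩
    refine ⟨i, j, k, ho, m1.2.2.1, fun i' j' k' ho' => ?_⟩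
    have := (all _ _ _ ho').trans (all _ _ _ ho).symm
    simpa using this
  · rintro ⟨i, j, k, ho, hk, hu⟩
    refine ⟨⟨(i, j, k), ?_⟩, ⟨(i, j, k), ?_⟩⟩
    · ext ⟨i', j', k'⟩
      simp only [Finset.mem_filter, Finset.mem_univ, true_and, Finset.mem_singleton, Prod.mk.injEq]
      constructor
      · rintro ⟨a, b, -, c⟩
        exact hu _ _ _ ⟨a, b, c⟩
      · rintro ⟨rfl, rfl, rfl⟩
        exact ⟨ho.1, ho.2.1, hk, ho.2.2⟩
    · ext ⟨i', j', k'⟩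
      simp only [Finset.mem_filter, Finset.mem_univ, true_and, Finset.mem_singleton, Prod.mk.injEq]
      constructor
      · exact hu _ _ _
      · rintro ⟨rfl, rfl, rfl⟩
        exact ho

open Classical in
noncomputable def cnt {n : ℕ} (P : Equiv.Perm (Fin n) → Prop) : ℕ :=
  (Finset.univ.filter P).card

lemma cnt_succ {n : ℕ} (P : Equiv.Perm (Fin (n+1)) → Prop) :
    cnt P = ∑ z : Fin (n+1), cnt (fun s => P (sn z s)) := by
  classical
  unfold cnt
  simp only [Finset.card_filter]
  rw [← (sn_bij n).sum_comp, Fintype.sum_prod_type]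

lemma cnt_congr {n : ℕ} {P Q : Equiv.Perm (Fin n) → Prop} (h : ∀ s, P s ↔ Q s) :
    cnt P = cnt Q := by
  have : P = Q := by ext s; exact h s
  rw [this]

lemma cnt_or {n : ℕ} {P Q : Equiv.Perm (Fin n) → Prop} (h : ∀ s, P s → ¬ Q s) :
    cnt (fun s => P s ∨ Q s) = cnt P + cnt Q := by
  classical
  unfold cnt
  rw [← Finset.card_union_of_disjoint]
  · congr 1; ext s; simp
  · rw [Finset.disjoint_filter]; intro s _; exact h s

open Classical in
lemma cnt_and {n : ℕ} (p : Prop) (Q : Equiv.Perm (Fin n) → Prop) :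
    cnt (fun s => p ∧ Q s) = if p then cnt Q else 0 := by
  by_cases h : p <;> simp [h, cnt]

noncomputable def F (n u : ℕ) : ℕ := cnt (fun s : Equiv.Perm (Fin n) => A s u)
noncomputable def G (n u : ℕ) : ℕ := cnt (fun s : Equiv.Perm (Fin n) => B s u)
noncomputable def E (n z : ℕ) : ℕ := cnt (fun s : Equiv.Perm (Fin n) => D s z)

lemma F_succ (n u : ℕ) : F (n+1) u =
    (∑ z ∈ Finset.range (n+1), if u ≤ z then F n z else 0) + if 0 < u then F n (u-1) else 0 := by
  classical
  have h : ∀ z : Fin (n+1), cnt (fun s : Equiv.Perm (Fin n) => A (sn z s) u) =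
      (fun z : ℕ => (if u ≤ z then F n z else 0) + if z < u ∧ z = 0 then F n (u-1) else 0) z := by
    intro z
    rw [cnt_congr (fun s => stepA z s u), cnt_or, cnt_and]
    · simp only [← and_assoc]
      rw [cnt_and]
      simp only [F]
      congr
    · intro s; omega
  rw [F, cnt_succ, Finset.sum_congr rfl (fun z _ => h z),
    Fin.sum_univ_eq_sum_range (fun z : ℕ => (if u ≤ z then F n z else 0) + if z < u ∧ z = 0 then F n (u-1) else 0), Finset.sum_add_distrib]
  congr 1
  rw [Finset.sum_eq_single 0]
  · simp
  · intro b _ hb; simp [hb]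
  · simp

lemma G_succ (n u : ℕ) : G (n+1) u =
    (∑ z ∈ Finset.range (n+1), if u ≤ z then G n z else 0) + (if 0 < u then G n (u-1) else 0)
     + if u ≤ 1 then ∑ z ∈ Finset.range (n+1), E n z else 0 := by
  classical
  have h : ∀ z : Fin (n+1), cnt (fun s : Equiv.Perm (Fin n) => B (sn z s) u) =
      (fun z : ℕ => (if u ≤ z then G n z else 0) + (if z < u ∧ z = 0 then G n (u-1) else 0)
        + if u ≤ 1 then E n z else 0) z := by
    intro z
    rw [cnt_congr (fun s => stepB z s u), cnt_or, cnt_or, cnt_and]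
    · simp only [← and_assoc]
      rw [cnt_and, cnt_and]
      simp only [G, E]
      congr
    · intro s; omega
    · rintro s (h | h) h'
      · exact U_not_D s z h.2.1 h'.2
      · exact U_not_D s z h.2.2.1 h'.2
  rw [G, cnt_succ, Finset.sum_congr rfl (fun z _ => h z),
    Fin.sum_univ_eq_sum_range (fun z : ℕ => (if u ≤ z then G n z else 0) + (if z < u ∧ z = 0 then G n (u-1) else 0)
        + if u ≤ 1 then E n z else 0), Finset.sum_add_distrib, Finset.sum_add_distrib]
  congr 1
  · congr 1
    rw [Finset.sum_eq_single 0]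
    · simp
    · intro b _ hb; simp [hb]
    · simp
  · split_ifs <;> simp

lemma E_zero (z : ℕ) : E 0 z = 0 := by
  classical
  unfold E cnt
  rw [Finset.card_eq_zero, Finset.filter_eq_empty_iff]
  rintro s - ⟨_, i, _⟩
  exact i.elim0

lemma E_succ (n z : ℕ) (hz : z ≤ n + 1) : E (n+1) z = if 2 ≤ z then F n (z-1) else 0 := by
  classical
  rw [E, cnt_succ]
  have h : ∀ b : Fin (n+1), cnt (fun s : Equiv.Perm (Fin n) => D (sn b s) z) =
      (fun b : ℕ => if b = 1 ∧ 2 ≤ z then F n (z-1) else 0) b := by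
    intro b
    rw [cnt_congr (fun s => stepD b s z)]
    simp only [← and_assoc]
    rw [cnt_and]
    simp only [F]
    congr
  rw [Finset.sum_congr rfl (fun z _ => h z),
    Fin.sum_univ_eq_sum_range (fun b : ℕ => if b = 1 ∧ 2 ≤ z then F n (z-1) else 0)]
  by_cases h2 : 2 ≤ z
  · rw [Finset.sum_eq_single 1]
    · simp
    · intro b _ hb; simp [hb]
    · intro hb; simp at hb; omega
  · simp [h2]

lemma tele (h : ℕ → ℤ) (u N : ℕ) (hu : u ≤ N) :
    (∑ z ∈ Finset.range N, if u ≤ z then h z - h (z+1) else 0) = h u - h N := by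
  induction N, hu using Nat.le_induction with
  | base =>
    rw [sub_self]
    apply Finset.sum_eq_zero
    intro z hz
    rw [Finset.mem_range] at hz
    rw [if_neg (by omega)]
  | succ N hN ih =>
    rw [Finset.sum_range_succ, ih, if_pos hN]; ring

def f (n u : ℕ) : ℤ := (2*n-u).choose n - (2*n-u).choose (n+1)
def g (n u : ℕ) : ℤ := (2*n-1-u).choose (n+1) - (2*n-1-u).choose (n+2)

lemma f_rec (n z : ℕ) (hz : z ≤ n) : f n z = f (n+1) (z+1) - f (n+1) (z+2) := by
  unfold f
  rw [show 2*(n+1) - (z+1) = (2*n-z)+1 by omega, show 2*(n+1) - (z+2) = 2*n-z by omega,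
    Nat.choose_succ_succ, Nat.choose_succ_succ]
  push_cast; ring

lemma f_zero (n : ℕ) : f (n+1) 0 = f (n+1) 1 := by
  unfold f
  rw [show 2*(n+1) - 0 = (2*n+1)+1 by omega, show 2*(n+1) - 1 = 2*n+1 by omega,
    Nat.choose_succ_succ (2*n+1) n, Nat.choose_succ_succ (2*n+1) (n+1)]
  have : (2*n+1).choose n = (2*n+1).choose (n+1) := by
    apply Nat.choose_symm_of_eq_add; omega
  rw [this]; push_cast; ring

lemma f_end (n : ℕ) : f (n+1) (n+2) = 0 := by
  unfold f
  rw [Nat.choose_eq_zero_of_lt (by omega), Nat.choose_eq_zero_of_lt (by omega)]; simp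

lemma g_rec (n z : ℕ) (hn : 1 ≤ n) (hz : z ≤ n) : g n z = g (n+1) (z+1) - g (n+1) (z+2) := by
  unfold g
  rw [show 2*(n+1) -1 - (z+1) = (2*n-1-z)+1 by omega, show 2*(n+1) - 1 - (z+2) = 2*n-1-z by omega,
    Nat.choose_succ_succ, Nat.choose_succ_succ]
  push_cast; ring

lemma g_end (n : ℕ) : g (n+1) (n+2) = 0 := by
  unfold g
  rw [Nat.choose_eq_zero_of_lt (by omega), Nat.choose_eq_zero_of_lt (by omega)]; simp

lemma g_f (n : ℕ) (hn : 1 ≤ n) : g n 0 = g n 1 + f n 2 := by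
  obtain ⟨n, rfl⟩ : ∃ m, n = m + 1 := ⟨n-1, by omega⟩
  unfold g f
  rw [show 2*(n+1) -1 - 0 = 2*n+1 by omega, show 2*(n+1) - 1 - 1 = 2*n by omega,
    show 2*(n+1) - 2 = 2*n by omega,
    Nat.choose_succ_succ, Nat.choose_succ_succ]
  push_cast; ring

lemma F_eq (n : ℕ) : ∀ u ≤ n, (F n u : ℤ) = f n u := by
  induction n with
  | zero =>
    intro u hu
    obtain rfl : u = 0 := by omega
    have : F 0 0 = 1 := by
      classical
      unfold F cnt
      rw [Finset.filter_true_of_mem]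
      · simp
      · intro s _
        exact ⟨fun i => i.elim0, fun i => i.elim0⟩
    rw [this]; simp [f]
  | succ n ih =>
    intro u hu
    have h1 : ((∑ z ∈ Finset.range (n+1), if u ≤ z then F n z else 0 : ℕ) : ℤ) = f (n+1) (u+1) := by
      have := tele (fun z => f (n+1) (z+1)) u (n+1) hu
      simp only [f_end, sub_zero] at this
      rw [← this]
      push_cast
      apply Finset.sum_congr rfl
      intro z hz
      rw [Finset.mem_range] at hz
      rw [ih z (by omega), f_rec n z (by omega)]
    rw [F_succ, Nat.cast_add, h1]
    rcases Nat.eq_zero_or_pos u with rfl | hp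
    · simp [f_zero]
    · rw [if_pos hp, ih (u-1) (by omega), f_rec n (u-1) (by omega)]
      rw [show u - 1 + 1 = u by omega, show u - 1 + 2 = u + 1 by omega]
      ring

lemma E_sum (n : ℕ) : ((∑ z ∈ Finset.range (n+1+1), E (n+1) z : ℕ) : ℤ) = f (n+1) 2 := by
  have := tele (fun z => f (n+1) z) 2 (n+2) (by omega)
  simp only [f_end, sub_zero] at this
  rw [← this]
  push_cast
  apply Finset.sum_congr rfl
  intro z hz
  rw [Finset.mem_range] at hz
  rw [E_succ n z (by omega)]
  split_ifs with h
  · rw [F_eq n _ (by omega), f_rec n _ (by omega)]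
    rw [show z - 1 + 1 = z by omega, show z - 1 + 2 = z + 1 by omega]
  · simp

lemma G_zero_one (n : ℕ) : G n 0 = G n 1 := by
  apply cnt_congr
  intro s
  unfold B
  refine and_congr_right fun _ => ⟨fun _ i j _ hs => ?_, fun _ i j _ _ => Nat.zero_le _⟩
  rw [Fin.lt_def] at hs; omega

lemma G_zero (u : ℕ) : G 0 u = 0 := by
  classical
  unfold G cnt
  rw [Finset.card_eq_zero, Finset.filter_eq_empty_iff]
  rintro s - ⟨⟨i, _⟩, _⟩
  exact i.elim0

lemma G_eq (n : ℕ) : (∀ u, 1 ≤ u → u ≤ n → (G n u : ℤ) = g n u) ∧ (G n 0 : ℤ) = g n 1 := by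
  induction n with
  | zero =>
    refine ⟨fun u h1 h2 => by omega, ?_⟩
    rw [G_zero]; simp [g]
  | succ n ih =>
    have main : ∀ u, 1 ≤ u → u ≤ n + 1 → (G (n+1) u : ℤ) = g (n+1) u := by
      intro u hu1 hu
      rcases Nat.eq_zero_or_pos n with rfl | hn
      · obtain rfl : u = 1 := by omega
        rw [G_succ]
        simp [G_zero, E_zero, g]
      have h1 : ((∑ z ∈ Finset.range (n+1), if u ≤ z then G n z else 0 : ℕ) : ℤ)
          = g (n+1) (u+1) := by
        have := tele (fun z => g (n+1) (z+1)) u (n+1) hu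
        simp only [g_end, sub_zero] at this
        rw [← this]
        push_cast
        apply Finset.sum_congr rfl
        intro z hz
        rw [Finset.mem_range] at hz
        split_ifs with h
        · rw [ih.1 z (by omega) (by omega), g_rec n z (by omega) (by omega)]
        · rfl
      have h3 := g_rec n (u-1) hn (by omega)
      rw [show u - 1 + 1 = u by omega, show u - 1 + 2 = u + 1 by omega] at h3
      rw [G_succ, Nat.cast_add, Nat.cast_add, h1, if_pos (by omega)]
      by_cases hu2 : u = 1
      · subst hu2
        rw [if_pos le_rfl]
        obtain ⟨m, rfl⟩ : ∃ m, n = m + 1 := ⟨n-1, by omega⟩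
        rw [E_sum]
        have h4 := g_f (m+1) hn
        have h5 := ih.2
        simp only [Nat.sub_self] at h3 ⊢
        linarith
      · rw [if_neg (by omega), ih.1 (u-1) (by omega) (by omega)]
        simp only [Nat.cast_zero]
        linarith
    refine ⟨main, ?_⟩
    rw [G_zero_one]
    exact main 1 le_rfl (by omega)

lemma ncard_eq (n : ℕ) :
    {π : Equiv.Perm (Fin n) | occ1_23 π = 1 ∧ occ123 π = 1}.ncard = G n 0 := by
  classical
  unfold G cnt
  rw [← Set.ncard_coe_finset]
  congr 1
  ext s
  rw [Finset.mem_coe, Finset.mem_filter]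
  change (occ1_23 s = 1 ∧ occ123 s = 1) ↔ _
  rw [occ_iff]
  simp only [Finset.mem_univ, true_and, B]
  exact ⟨fun h => ⟨h, fun _ _ _ _ => Nat.zero_le _⟩, fun h => h.1⟩

end S123

/-- The number of permutations of length `n ≥ 3` with exactly one occurrence of
the vincular pattern 1-23 and exactly one occurrence of the classical pattern
1-2-3 is `(5/(n+2)) * C(2n-2, n+1)`. -/
theorem single_1_23_count (n : ℕ) (hn : 3 ≤ n) :
    ({π : Equiv.Perm (Fin n) | occ1_23 π = 1 ∧ occ123 π = 1}.ncard : ℚ)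
      = (5 / (n + 2 : ℚ)) * (Nat.choose (2 * n - 2) (n + 1)) := by
  rw [S123.ncard_eq]
  have h : (S123.G n 0 : ℤ) = S123.g n 1 := (S123.G_eq n).2
  have h' : (S123.G n 0 : ℚ) = (2*n-2).choose (n+1) - (2*n-2).choose (n+2) := by
    unfold S123.g at h
    rw [show 2*n-1-1 = 2*n-2 by omega] at h
    exact_mod_cast h
  have h2 := Nat.choose_succ_right_eq (2*n-2) (n+1)
  rw [show 2*n-2-(n+1) = n-3 by omega] at h2
  have h3 : ((2*n-2).choose (n+2) : ℚ) * (n+2) = (2*n-2).choose (n+1) * (n-3) := by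
    have := congrArg (fun x : ℕ => (x : ℚ)) h2
    simp only [Nat.cast_mul, Nat.cast_sub hn] at this
    push_cast at this
    rw [← this]; ring
  have h4 : (n + 2 : ℚ) ≠ 0 := by positivity
  rw [h']
  field_simp
  linarith
end

section
/- For n ≥ 3, the number of permutations of length n with exactly one occurrence of the classical pattern 1-2-3 equals (6/(n+3)) * C(2n-1, n+2). -/
namespace S321

/-- 321-avoidance. -/
def Av {n : ℕ} (π : Equiv.Perm (Fin n)) : Prop :=
  ∀ x y z : Fin n, x < y → y < z → π y < π x → ¬ π z < π y

/-- No inversion whose values are both at least `m`. -/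
def G {n : ℕ} (π : Equiv.Perm (Fin n)) (m : ℕ) : Prop :=
  ∀ x y : Fin n, x < y → m ≤ (π y : ℕ) → π x < π y

/-- Insert a final entry `v`. -/
noncomputable def ins {n : ℕ} (v : Fin (n+1)) (σ : Equiv.Perm (Fin n)) : Equiv.Perm (Fin (n+1)) :=
  Equiv.ofBijective (Fin.snoc (α := fun _ => Fin (n+1)) (fun x => v.succAbove (σ x)) v) (by
    apply Function.Injective.bijective_of_finite
    intro x y
    induction x using Fin.lastCases <;> induction y using Fin.lastCases <;>
      simp [Fin.succAbove_ne, (Fin.succAbove_ne _ _).symm])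

@[simp] lemma ins_last {n : ℕ} (v : Fin (n+1)) (σ : Equiv.Perm (Fin n)) :
    ins v σ (Fin.last n) = v := by simp [ins]

@[simp] lemma ins_castSucc {n : ℕ} (v : Fin (n+1)) (σ : Equiv.Perm (Fin n)) (x : Fin n) :
    ins v σ x.castSucc = v.succAbove (σ x) := by simp [ins]

lemma ins_inj {n : ℕ} : Function.Injective
    (fun p : Fin (n+1) × Equiv.Perm (Fin n) => ins p.1 p.2) := by
  rintro ⟨v, σ⟩ ⟨w, τ⟩ h
  have h1 : v = w := by simpa using congrArg (fun f => f (Fin.last n)) h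
  subst h1
  simp only [Prod.mk.injEq, true_and]
  ext x
  have := congrArg (fun f => f x.castSucc) h
  simp at this
  rw [this]

lemma ins_bij {n : ℕ} : Function.Bijective
    (fun p : Fin (n+1) × Equiv.Perm (Fin n) => ins p.1 p.2) := by
  rw [Fintype.bijective_iff_injective_and_card]
  refine ⟨ins_inj, ?_⟩
  simp [Fintype.card_perm, Nat.factorial_succ]

lemma av_ins {n : ℕ} (v : Fin (n+1)) (σ : Equiv.Perm (Fin n)) :
    Av (ins v σ) ↔ Av σ ∧ G σ v := by
  constructor
  · intro h
    refine ⟨fun x y z hxy hyz h1 h2 => ?_, fun x y hxy hv => ?_⟩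
    · exact h x.castSucc y.castSucc z.castSucc (by simpa) (by simpa) (by simpa) (by simpa)
    · by_contra hc
      have hne : σ x ≠ σ y := fun e => hxy.ne (σ.injective e)
      have := h x.castSucc y.castSucc (Fin.last n) (by simpa) (Fin.castSucc_lt_last _)
        (by simp; exact lt_of_le_of_ne (not_lt.mp hc) hne.symm)
      apply this
      simp [Fin.lt_succAbove_iff_le_castSucc, Fin.le_def, hv]
  · rintro ⟨h, hG⟩ x y z hxy hyz h1 h2
    induction y using Fin.lastCases with
    | last => exact absurd hyz (not_lt.mpr (Fin.le_last _))
    | cast y =>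
    induction x using Fin.lastCases with
    | last => exact absurd hxy (not_lt.mpr (Fin.le_last _))
    | cast x =>
    induction z using Fin.lastCases with
    | cast z => exact h x y z (by simpa using hxy) (by simpa using hyz) (by simpa using h1) (by simpa using h2)
    | last =>
      simp [Fin.lt_succAbove_iff_le_castSucc, Fin.le_def] at h2
      simp at h1 hxy
      exact absurd (hG x y hxy h2) (not_lt.mpr h1.le)

lemma G_ge {n : ℕ} (σ : Equiv.Perm (Fin n)) (m : ℕ) (h : n ≤ m + 1) : G σ m := by
  intro x y hxy hm
  have := (σ x).2
  have hne : (σ x : ℕ) ≠ σ y := fun e => hxy.ne (σ.injective (Fin.ext e))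
  rw [Fin.lt_def]; have := (σ y).2; omega

lemma G_ins {n : ℕ} (v : Fin (n+1)) (σ : Equiv.Perm (Fin n)) (m : ℕ) (hm : m ≤ n) (hG : G σ v) :
    G (ins v σ) m ↔ ((v : ℕ) = n ∧ G σ m) ∨ (v : ℕ) < m := by
  have sa : ∀ x : Fin n, ((v.succAbove x : Fin (n+1)) : ℕ) = if (x:ℕ) < v then (x:ℕ) else x + 1 := by
    intro x; simp [Fin.succAbove, Fin.lt_def]; split_ifs <;> simp
  constructor
  · intro h
    by_cases hv : (v : ℕ) = n
    · left
      refine ⟨hv, fun x y hxy hy => ?_⟩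
      have := h x.castSucc y.castSucc (by simpa) (by simp [sa]; split_ifs <;> omega)
      simpa using this
    · right
      by_contra hc
      have hlt : (v : ℕ) < n := by omega
      obtain ⟨x, hx⟩ := σ.surjective ⟨v, hlt⟩
      have := h x.castSucc (Fin.last n) (Fin.castSucc_lt_last _) (by simp; omega)
      rw [Fin.lt_def] at this
      simp [sa, hx] at this
  · intro h x y hxy hy
    induction x using Fin.lastCases with
    | last => exact absurd hxy (not_lt.mpr (Fin.le_last _))
    | cast x =>
    induction y using Fin.lastCases with
    | last =>
      rw [Fin.lt_def]
      simp [sa] at hy ⊢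
      have := (σ x).2
      rcases h with ⟨h, _⟩ | h <;> split_ifs <;> omega
    | cast y =>
      simp at hxy ⊢
      simp [sa] at hy
      have := (σ y).2
      rcases h with ⟨h, h'⟩ | h
      · apply h' x y hxy; split_ifs at hy <;> omega
      · apply hG x y hxy; split_ifs at hy <;> omega

open Classical in
noncomputable def F (n m : ℕ) : ℕ :=
  (Finset.univ.filter (fun σ : Equiv.Perm (Fin n) => Av σ ∧ G σ m)).card

open Classical in
noncomputable def c (n : ℕ) : ℕ :=
  (Finset.univ.filter (fun σ : Equiv.Perm (Fin n) => Av σ)).card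

lemma F_ge (n m : ℕ) (h : n ≤ m + 1) : F n m = c n := by
  unfold F c
  congr 1
  ext σ
  simp [G_ge σ m h]

open Classical in
lemma F_succ (n m : ℕ) (hm : m ≤ n) :
    F (n+1) m = ∑ v ∈ Finset.range (m+1), F n v := by
  have h1 : F (n+1) m = (Finset.univ.filter (fun p : Fin (n+1) × Equiv.Perm (Fin n) =>
      Av (ins p.1 p.2) ∧ G (ins p.1 p.2) m)).card := by
    unfold F
    symm
    apply Finset.card_bij (fun p _ => ins p.1 p.2)
    · intro p; simp
    · intro p _ q _ h; exact ins_inj h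
    · intro σ hσ
      obtain ⟨p, rfl⟩ := ins_bij.2 σ
      exact ⟨p, by simpa using hσ, rfl⟩
  have h2 : ∀ v : Fin (n+1), (Finset.univ.filter (fun σ : Equiv.Perm (Fin n) =>
      Av (ins v σ) ∧ G (ins v σ) m)).card =
      if (v : ℕ) = n then F n m else if (v:ℕ) < m then F n v else 0 := by
    intro v
    split_ifs with a b
    · unfold F; congr 1; ext σ
      simp only [Finset.mem_filter, Finset.mem_univ, true_and, av_ins]
      have hv : G σ v := G_ge _ _ (by omega)
      rw [and_iff_left hv, G_ins v σ m hm hv]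
      have : ¬ (v : ℕ) < m := by omega
      simp [a]
      intro _ h; omega
    · unfold F; congr 1; ext σ
      simp only [Finset.mem_filter, Finset.mem_univ, true_and, av_ins]
      refine ⟨fun h => h.1, fun h => ⟨h, (G_ins v σ m hm h.2).2 (Or.inr b)⟩⟩
    · rw [Finset.card_eq_zero, Finset.filter_eq_empty_iff]
      intro σ _
      rw [av_ins]
      rintro ⟨⟨_, h⟩, h'⟩
      rw [G_ins v σ m hm h] at h'
      omega
  have h3 : F (n+1) m = ∑ v : Fin (n+1), (if (v : ℕ) = n then F n m else if (v:ℕ) < m then F n v else 0) := by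
    rw [h1, Finset.card_filter, Fintype.sum_prod_type]
    apply Finset.sum_congr rfl
    intro v _
    rw [← h2, Finset.card_filter]
  rw [h3, Fin.sum_univ_eq_sum_range (fun v => if v = n then F n m else if v < m then F n v else 0),
    Finset.sum_range_succ, Finset.sum_range_succ]
  simp only [if_true]
  congr 1
  rw [← Finset.sum_subset (Finset.range_subset_range.2 hm)]
  · apply Finset.sum_congr rfl
    intro x hx; simp at hx
    rw [if_neg (by omega), if_pos hx]
  · intro x hx hx'; simp at hx hx'
    rw [if_neg (by omega), if_neg (by omega)]

lemma F_zero (n : ℕ) : F n 0 = 1 := by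
  induction n with
  | zero => rw [F_ge _ _ (by omega)]; unfold c; simp [Av]
  | succ n ih => rw [F_succ _ _ (by omega)]; simp [ih]

lemma F_step (n m : ℕ) (h : m + 1 ≤ n) : F (n+1) (m+1) = F (n+1) m + F n (m+1) := by
  rw [F_succ _ _ h, F_succ _ _ (by omega), Finset.sum_range_succ]

lemma F_closed (n : ℕ) : ∀ m, m ≤ n →
    (F n (m) : ℤ) + (if m = 0 then 0 else Nat.choose (n+m) (m-1)) = Nat.choose (n+m) m := by
  induction n with
  | zero => intro m hm; obtain rfl : m = 0 := by omega
            simp [F_zero]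
  | succ n ih =>
    intro m
    induction m with
    | zero => simp [F_zero]
    | succ m ihm =>
      intro hm
      have e1 := ihm (by omega)
      by_cases hmn : m + 1 ≤ n
      · have e2 := ih (m+1) hmn
        rw [F_step n m hmn]
        simp at e2 ⊢
        rcases m with _ | m
        · simp [F_zero] at e2 ⊢; linarith
        · simp at e1
          have a1 : n + 1 + (m + 1 + 1) = (n + 1 + (m+1)) + 1 := by ring
          have a2 : n + (m + 1 + 1) = (n + 1 + (m+1)) := by ring
          rw [a2] at e2
          rw [a1, Nat.choose_succ_succ, Nat.choose_succ_succ (n+1+(m+1)) (m+1)]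
          push_cast
          linarith
      · obtain rfl : m = n := by omega
        have : F (m+1) (m+1) = F (m+1) m := by rw [F_ge _ _ (by omega), F_ge _ _ (by omega)]
        rw [this]
        have a1 : m + 1 + (m + 1) = (m + 1 + m) + 1 := by ring
        rw [a1]
        simp
        rcases m with _ | m
        · simp [F_zero]
        · simp at e1
          rw [Nat.choose_succ_succ, Nat.choose_succ_succ (m+1+1+(m+1)) (m+1)]
          have : (m+1+1+(m+1)).choose (m+1) = (m+1+1+(m+1)).choose (m+1+1) :=
            (Nat.choose_symm_of_eq_add (by ring))
          push_cast
          simp only [Nat.succ_eq_add_one]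
          rw [← this]
          linarith

lemma c_eq (n : ℕ) : c n = catalan n := by
  have h := F_closed n n le_rfl
  rw [F_ge _ _ (by omega)] at h
  have hs := succ_mul_catalan_eq_centralBinom n
  rw [Nat.centralBinom_eq_two_mul_choose, two_mul] at hs
  rcases n with _ | n
  · simp at *; exact_mod_cast h
  · simp at h
    have h2 := Nat.choose_succ_right_eq (n+1+(n+1)) n
    have h3 : n+1+(n+1) - n = n + 2 := by omega
    rw [h3] at h2
    zify at h2 hs ⊢
    have : ((n:ℤ)+2) * c (n+1) = (n+2) * catalan (n+1) := by
      linear_combination (n+2)*h - hs + h2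
    exact mul_left_cancel₀ (by positivity) this

open Classical in
noncomputable def P (n m : ℕ) : ℕ :=
  (Finset.univ.filter (fun σ : Equiv.Perm (Fin n) => Av σ ∧ ∀ x : Fin n, m ≤ (x:ℕ) → σ x = x)).card

open Classical in
noncomputable def Q (n m : ℕ) : ℕ :=
  (Finset.univ.filter (fun σ : Equiv.Perm (Fin n) => Av σ ∧ ∀ x : Fin n, (x:ℕ) < m → σ x = x)).card

open Classical in
lemma P_succ (n m : ℕ) (h : m ≤ n) : P (n+1) m = P n m := by
  unfold P
  symm
  apply Finset.card_bij (fun σ _ => ins (Fin.last n) σ)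
  · intro σ hσ
    simp only [Finset.mem_filter, Finset.mem_univ, true_and] at hσ ⊢
    refine ⟨(av_ins _ _).2 ⟨hσ.1, G_ge _ _ (by simp)⟩, fun x hx => ?_⟩
    induction x using Fin.lastCases with
    | last => simp
    | cast x => simp at hx; simp [hσ.2 x hx]
  · intro σ _ τ _ h
    have := ins_inj (a₁ := (Fin.last n, σ)) (a₂ := (Fin.last n, τ)) h
    simpa using this
  · intro π hπ
    obtain ⟨⟨v, σ⟩, rfl⟩ := ins_bij.2 π
    simp only [Finset.mem_filter, Finset.mem_univ, true_and, av_ins] at hπ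
    have hv : v = Fin.last n := by
      have := hπ.2 (Fin.last n) (by simpa using h)
      simpa using this
    subst hv
    refine ⟨σ, ?_, rfl⟩
    simp only [Finset.mem_filter, Finset.mem_univ, true_and]
    refine ⟨hπ.1.1, fun x hx => ?_⟩
    have := hπ.2 x.castSucc (by simpa using hx)
    simpa using this

lemma P_eq (n m : ℕ) (h : m ≤ n) : P n m = c m := by
  induction n, h using Nat.le_induction with
  | base => 
    unfold P c; congr 1; ext σ
    simp only [Finset.mem_filter, Finset.mem_univ, true_and, and_iff_left_iff_imp]
    intro _ x hx; have := x.2; omega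
  | succ n h ih => rw [P_succ n m h, ih]

lemma av_conj {n : ℕ} (σ : Equiv.Perm (Fin n)) (h : Av σ) : Av (Fin.revPerm * σ * Fin.revPerm) := by
  intro x y z hxy hyz h1 h2
  simp at h1 h2
  exact h z.rev y.rev x.rev (by simpa) (by simpa) h2 h1

lemma conj_conj {n : ℕ} (σ : Equiv.Perm (Fin n)) :
    Fin.revPerm * (Fin.revPerm * σ * Fin.revPerm) * Fin.revPerm = σ := by
  ext x; simp

open Classical in
lemma Q_eq (n b : ℕ) (h : b ≤ n) : Q n b = c (n - b) := by
  rw [← P_eq n (n-b) (by omega)]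
  unfold P Q
  apply Finset.card_bij (fun σ _ => Fin.revPerm * σ * Fin.revPerm)
  · intro σ hσ
    simp only [Finset.mem_filter, Finset.mem_univ, true_and] at hσ ⊢
    refine ⟨av_conj σ hσ.1, fun x hx => ?_⟩
    have := hσ.2 x.rev (by rw [Fin.val_rev]; omega)
    simp [this]
  · intro σ _ τ _ h
    rw [← conj_conj σ, h, conj_conj]
  · intro σ hσ
    simp only [Finset.mem_filter, Finset.mem_univ, true_and] at hσ 
    refine ⟨_, ?_, conj_conj σ⟩
    simp only [Finset.mem_filter, Finset.mem_univ, true_and]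
    refine ⟨av_conj σ hσ.1, fun x hx => ?_⟩
    have := hσ.2 x.rev (by rw [Fin.val_rev]; omega)
    simp [this]

/-- Left factors. -/
def IsL {n : ℕ} (b : Fin n) (ρ : Equiv.Perm (Fin n)) : Prop :=
  Av ρ ∧ (∀ x, b < x → ρ x = x) ∧ ρ b ≠ b

/-- Right factors. -/
def IsR {n : ℕ} (b : Fin n) (τ : Equiv.Perm (Fin n)) : Prop :=
  Av τ ∧ (∀ x, x < b → τ x = x) ∧ τ b ≠ b

/-- Exactly one occurrence of 321, with middle at position `b`. -/
def IsS {n : ℕ} (b : Fin n) (π : Equiv.Perm (Fin n)) : Prop :=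
  ∃ i k, i < b ∧ b < k ∧ π b < π i ∧ π k < π b ∧
    ∀ x y z : Fin n, x < y → y < z → π y < π x → π z < π y → x = i ∧ y = b ∧ z = k

open Classical in
lemma card_L {n : ℕ} (b : Fin n) :
    (Finset.univ.filter (IsL b)).card + c b = c (b+1) := by
  rw [← P_eq n b b.2.le, ← P_eq n (b+1) b.2]
  unfold P
  rw [← Finset.card_union_of_disjoint]
  · congr 1; ext σ
    simp only [Finset.mem_filter, Finset.mem_univ, true_and, Finset.mem_union, IsL]
    constructor
    · rintro (⟨h, h1, h2⟩ | ⟨h, h1⟩)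
      · exact ⟨h, fun x hx => h1 x (by rw [Fin.lt_def]; omega)⟩
      · exact ⟨h, fun x hx => h1 x (by omega)⟩
    · rintro ⟨h, h1⟩
      by_cases hb : σ b = b
      · right
        refine ⟨h, fun x hx => ?_⟩
        rcases eq_or_ne x b with rfl | hne
        · exact hb
        · have : (x:ℕ) ≠ b := fun e => hne (Fin.ext e)
          exact h1 x (by omega)
      · left
        exact ⟨h, fun x hx => h1 x (by rw [Fin.lt_def] at hx; omega), hb⟩
  · rw [Finset.disjoint_filter]
    rintro σ _ ⟨_, _, h⟩ ⟨_, h'⟩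
    exact h (h' b le_rfl)

open Classical in
lemma card_R {n : ℕ} (b : Fin n) :
    (Finset.univ.filter (IsR b)).card + c (n - (b + 1)) = c (n - b) := by
  rw [← Q_eq n b b.2.le, ← Q_eq n (b+1) b.2]
  unfold Q
  rw [← Finset.card_union_of_disjoint]
  · congr 1; ext σ
    simp only [Finset.mem_filter, Finset.mem_univ, true_and, Finset.mem_union, IsR]
    constructor
    · rintro (⟨h, h1, h2⟩ | ⟨h, h1⟩)
      · exact ⟨h, fun x hx => h1 x (by rw [Fin.lt_def]; omega)⟩
      · exact ⟨h, fun x hx => h1 x (by omega)⟩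
    · rintro ⟨h, h1⟩
      by_cases hb : σ b = b
      · right
        refine ⟨h, fun x hx => ?_⟩
        rcases eq_or_ne x b with rfl | hne
        · exact hb
        · have : (x:ℕ) ≠ b := fun e => hne (Fin.ext e)
          exact h1 x (by omega)
      · left
        exact ⟨h, fun x hx => h1 x (by rw [Fin.lt_def] at hx; omega), hb⟩
  · rw [Finset.disjoint_filter]
    rintro σ _ ⟨_, _, h⟩ ⟨_, h'⟩
    exact h (h' b (by omega))

/-- Gluing. -/
def glue {n : ℕ} (b : Fin n) (ρ τ : Equiv.Perm (Fin n)) : Equiv.Perm (Fin n) :=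
  Equiv.swap b (ρ b) * τ * ρ

section
variable {n : ℕ} {b : Fin n} {ρ τ : Equiv.Perm (Fin n)}

lemma L_le (hL : IsL b ρ) {x : Fin n} (hx : x ≤ b) : ρ x ≤ b := by
  by_contra hc
  have := ρ.injective (hL.2.1 (ρ x) (not_le.1 hc))
  rw [this] at hc; exact hc hx

lemma R_le (hR : IsR b τ) {x : Fin n} (hx : b ≤ x) : b ≤ τ x := by
  by_contra hc
  have := τ.injective (hR.2.1 (τ x) (not_le.1 hc))
  rw [this] at hc; exact hc hx

lemma L_b (hL : IsL b ρ) : ρ b < b := lt_of_le_of_ne (L_le hL le_rfl) hL.2.2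
lemma R_b (hR : IsR b τ) : b < τ b := lt_of_le_of_ne (R_le hR le_rfl) hR.2.2.symm

lemma glue_b (hL : IsL b ρ) (hR : IsR b τ) : glue b ρ τ b = b := by
  simp [glue, hR.2.1 _ (L_b hL)]

lemma glue_lt (hL : IsL b ρ) (hR : IsR b τ) {x : Fin n} (hx : x < b) (h : ρ x ≠ b) :
    glue b ρ τ x = ρ x := by
  have h1 : ρ x < b := lt_of_le_of_ne (L_le hL hx.le) h
  simp [glue, hR.2.1 _ h1]
  exact Equiv.swap_apply_of_ne_of_ne h (fun e => hx.ne (ρ.injective e))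

lemma glue_lt' (hL : IsL b ρ) (hR : IsR b τ) {x : Fin n} (h : ρ x = b) :
    glue b ρ τ x = τ b := by
  simp [glue, h]
  exact Equiv.swap_apply_of_ne_of_ne hR.2.2 (((L_b hL).trans (R_b hR)).ne')

lemma glue_gt (hL : IsL b ρ) (hR : IsR b τ) {x : Fin n} (hx : b < x) (h : τ x ≠ b) :
    glue b ρ τ x = τ x := by
  simp [glue, hL.2.1 _ hx]
  exact Equiv.swap_apply_of_ne_of_ne h ((L_b hL).trans_le (R_le hR hx.le)).ne'

lemma glue_gt' (hL : IsL b ρ) {x : Fin n} (hx : b < x) (h : τ x = b) :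
    glue b ρ τ x = ρ b := by
  simp [glue, hL.2.1 _ hx, h]

lemma glue_min (hL : IsL b ρ) (hR : IsR b τ) {x : Fin n} (hx : x < b) :
    ρ x = min (glue b ρ τ x) b := by
  by_cases h : ρ x = b
  · rw [glue_lt' hL hR h, h, min_eq_right (R_b hR).le]
  · rw [glue_lt hL hR hx h, min_eq_left (L_le hL hx.le)]

lemma glue_max (hL : IsL b ρ) (hR : IsR b τ) {x : Fin n} (hx : b < x) :
    τ x = max (glue b ρ τ x) b := by
  by_cases h : τ x = b
  · rw [glue_gt' hL hx h, h, max_eq_right (L_b hL).le]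
  · rw [glue_gt hL hR hx h, max_eq_left (R_le hR hx.le)]

lemma perm_ext_off {α β : Equiv.Perm (Fin n)} (h : ∀ x, x ≠ b → α x = β x) : α = β := by
  ext x
  by_cases hx : x = b
  · subst hx
    obtain ⟨y, hy⟩ := α.surjective (β x)
    by_cases hyx : y = x
    · rw [← hy, hyx]
    · exact absurd (β.injective ((h y hyx).symm.trans hy)) hyx
  · rw [h x hx]

lemma glue_inj {ρ' τ' : Equiv.Perm (Fin n)} (hL : IsL b ρ) (hR : IsR b τ) (hL' : IsL b ρ')
    (hR' : IsR b τ') (h : glue b ρ τ = glue b ρ' τ') : ρ = ρ' ∧ τ = τ' := by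
  constructor
  · apply perm_ext_off (b := b)
    intro x hx
    rcases lt_or_gt_of_ne hx with hx | hx
    · rw [glue_min hL hR hx, h, ← glue_min hL' hR' hx]
    · rw [hL.2.1 x hx, hL'.2.1 x hx]
  · apply perm_ext_off (b := b)
    intro x hx
    rcases lt_or_gt_of_ne hx with hx | hx
    · rw [hR.2.1 x hx, hR'.2.1 x hx]
    · rw [glue_max hL hR hx, h, ← glue_max hL' hR' hx]

lemma glue_S (hL : IsL b ρ) (hR : IsR b τ) : IsS b (glue b ρ τ) := by
  obtain ⟨i, hi⟩ := ρ.surjective b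
  obtain ⟨k, hk⟩ := τ.surjective b
  have hb := L_b hL
  have hc := R_b hR
  have hib : i < b := by
    rcases lt_trichotomy i b with h | h | h
    · exact h
    · subst h; exact absurd hi hL.2.2
    · have := hL.2.1 i h; rw [hi] at this; exact absurd this h.ne
  have hkb : b < k := by
    rcases lt_trichotomy k b with h | h | h
    · have := hR.2.1 k h; rw [hk] at this; exact absurd this h.ne'
    · subst h; exact absurd hk hR.2.2
    · exact h
  have gb := glue_b hL hR
  have gi := glue_lt' hL hR hi
  have gk := glue_gt' hL hkb hk
  have gl : ∀ x, x < b → x ≠ i → glue b ρ τ x = ρ x ∧ ρ x < b := by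
    intro x hx hxi
    have : ρ x ≠ b := fun e => hxi (ρ.injective (e.trans hi.symm))
    exact ⟨glue_lt hL hR hx this, lt_of_le_of_ne (L_le hL hx.le) this⟩
  have gg : ∀ x, b < x → x ≠ k → glue b ρ τ x = τ x ∧ b < τ x := by
    intro x hx hxk
    have : τ x ≠ b := fun e => hxk (τ.injective (e.trans hk.symm))
    exact ⟨glue_gt hL hR hx this, lt_of_le_of_ne (R_le hR hx.le) this.symm⟩
  have hLA := hL.1
  have hRA := hR.1
  generalize glue b ρ τ = π at *
  refine ⟨i, k, hib, hkb, by rw [gb, gi]; exact hc, by rw [gb, gk]; exact hb, ?_⟩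
  intro x y z hxy hyz h1 h2
  rcases lt_trichotomy y b with hy | hy | hy
  · exfalso
    have hx : x < b := hxy.trans hy
    have hyi : y ≠ i := by
      rintro rfl
      have := gl x hx hxy.ne
      rw [this.1, gi] at h1
      exact absurd (h1.trans this.2) (not_lt.2 hc.le)
    obtain ⟨y1, y2⟩ := gl y hy hyi
    have hρ : ρ y < ρ x := by
      by_cases hxi : x = i
      · rw [hxi, hi]; exact y2
      · rw [← y1, ← (gl x hx hxi).1]; exact h1
    rcases lt_trichotomy z b with hz | hz | hz
    · have hzi : z ≠ i := by
        rintro rfl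
        rw [gi, y1] at h2
        exact absurd (hc.trans h2) (not_lt.2 y2.le)
      rw [y1, (gl z hz hzi).1] at h2
      exact hLA x y z hxy hyz hρ h2
    · rw [hz, gb, y1] at h2
      exact absurd h2 (not_lt.2 y2.le)
    · by_cases hzk : z = k
      · rw [hzk, gk, y1] at h2
        exact hLA x y b hxy hy hρ h2
      · obtain ⟨z1, z2⟩ := gg z hz hzk
        rw [z1, y1] at h2
        exact absurd (h2.trans y2) (not_lt.2 z2.le)
  · subst hy
    refine ⟨?_, rfl, ?_⟩
    · by_contra hxi
      obtain ⟨x1, x2⟩ := gl x hxy hxi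
      rw [x1, gb] at h1
      exact absurd h1 (not_lt.2 x2.le)
    · by_contra hzk
      obtain ⟨x1, x2⟩ := gg z hyz hzk
      rw [x1, gb] at h2
      exact absurd h2 (not_lt.2 x2.le)
  · exfalso
    have hz : b < z := hy.trans hyz
    have hyk : y ≠ k := by
      rintro rfl
      have := gg z hz hyz.ne'
      rw [this.1, gk] at h2
      exact absurd (h2.trans hb) (not_lt.2 this.2.le)
    obtain ⟨y1, y2⟩ := gg y hy hyk
    have hτ : τ z < τ y := by
      by_cases hzk : z = k
      · rw [hzk, hk]; exact y2
      · rw [← y1, ← (gg z hz hzk).1]; exact h2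
    rcases lt_trichotomy x b with hx | hx | hx
    · by_cases hxi : x = i
      · rw [hxi, gi, y1] at h1
        exact hRA b y z hy hyz h1 hτ
      · obtain ⟨z1, z2⟩ := gl x hx hxi
        rw [z1, y1] at h1
        exact absurd (h1.trans z2) (not_lt.2 y2.le)
    · rw [hx, gb, y1] at h1
      exact absurd h1 (not_lt.2 y2.le)
    · have hxk : x ≠ k := by
        rintro rfl
        rw [gk, y1] at h1
        exact absurd (h1.trans hb) (not_lt.2 y2.le)
      rw [y1, (gg x hx hxk).1] at h1
      exact hRA x y z hxy hyz h1 hτ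

lemma S_fix {π : Equiv.Perm (Fin n)} (i k : Fin n) (hib : i < b) (hbk : b < k)
    (hi : π b < π i) (hk : π k < π b)
    (gl : ∀ x, x < b → x ≠ i → π x < π b) (gg : ∀ x, b < x → x ≠ k → π b < π x) : π b = b := by
  have h1 : (insert k ((Finset.Iio b).erase i)).image π = Finset.Iio (π b) := by
    ext y
    obtain ⟨x, rfl⟩ := π.surjective y
    simp only [Finset.mem_image, EmbeddingLike.apply_eq_iff_eq, exists_eq_right,
      Finset.mem_insert, Finset.mem_erase, Finset.mem_Iio]
    constructor
    · rintro (rfl | ⟨h, h'⟩)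
      · exact hk
      · exact gl x h' h
    · intro hx
      by_contra! hc
      rcases lt_trichotomy x b with h | h | h
      · have : x = i := by by_contra h'; exact absurd (hc.2 h') (not_le.2 h)
        subst this; exact absurd hx (not_lt.2 hi.le)
      · subst h; exact lt_irrefl _ hx
      · exact absurd hx (not_lt.2 (gg x h hc.1).le)
  have h2 := congrArg Finset.card h1
  rw [Finset.card_image_of_injective _ π.injective, Finset.card_insert_of_notMem (by
    simp [hbk.le]), Finset.card_erase_of_mem (by simpa using hib)] at h2
  simp at h2
  have : (i:ℕ) < b := hib
  apply Fin.ext; omega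

lemma S_glue {π : Equiv.Perm (Fin n)} (h : IsS b π) :
    ∃ ρ τ, IsL b ρ ∧ IsR b τ ∧ glue b ρ τ = π := by
  obtain ⟨i, k, hib, hbk, hi, hk, hu⟩ := h
  have gl : ∀ x, x < b → x ≠ i → π x < π b := by
    intro x hx hxi
    by_contra hc
    have hne : π x ≠ π b := fun e => hx.ne (π.injective e)
    exact hxi (hu x b k hx hbk (lt_of_le_of_ne (not_lt.1 hc) hne.symm) hk).1
  have gg : ∀ x, b < x → x ≠ k → π b < π x := by
    intro x hx hxi
    by_contra hc
    have hne : π x ≠ π b := fun e => hx.ne' (π.injective e)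
    exact hxi (hu i b x hib hx hi (lt_of_le_of_ne (not_lt.1 hc) hne)).2.2
  have hb := S_fix i k hib hbk hi hk gl gg
  rw [hb] at hi hk
  simp only [hb] at gl gg
  have hπ := π.injective
  let f : Fin n → Fin n := fun x => if x < b then min (π x) b else if x = b then π k else x
  let g : Fin n → Fin n := fun x => if b < x then max (π x) b else if x = b then π i else x
  have f1 : ∀ x, x < b → x ≠ i → f x = π x := by
    intro x hx hxi; simp [f, hx, (gl x hx hxi).le]
  have f2 : f i = b := by simp [f, hib, hi.le]
  have f3 : f b = π k := by simp [f]
  have f4 : ∀ x, b < x → f x = x := by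
    intro x hx; simp [f, hx.not_gt, hx.ne']
  have g1 : ∀ x, b < x → x ≠ k → g x = π x := by
    intro x hx hxi; simp [g, hx, (gg x hx hxi).le]
  have g2 : g k = b := by simp [g, hbk, hk.le]
  have g3 : g b = π i := by simp [g]
  have g4 : ∀ x, x < b → g x = x := by
    intro x hx; simp [g, hx.not_gt, hx.ne]
  have fle : ∀ x, x ≤ b → f x ≤ b := by
    intro x hx
    grind
  have gle : ∀ x, b ≤ x → b ≤ g x := by
    intro x hx
    grind
  clear_value f g
  have fi : Function.Injective f := by
    intro x y hxy
    have : Function.Injective π := hπ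
    rcases lt_trichotomy x b with h | h | h <;> rcases lt_trichotomy y b with h' | h' | h' <;>
      by_cases hx : x = i <;> by_cases hy : y = i <;> grind [Function.Injective]
  have gi : Function.Injective g := by
    intro x y hxy
    rcases lt_trichotomy x b with h | h | h <;> rcases lt_trichotomy y b with h' | h' | h' <;>
      by_cases hx : x = k <;> by_cases hy : y = k <;> grind [Function.Injective]
  let ρ : Equiv.Perm (Fin n) := Equiv.ofBijective f fi.bijective_of_finite
  let τ : Equiv.Perm (Fin n) := Equiv.ofBijective g gi.bijective_of_finite
  have eρ : ∀ x, ρ x = f x := fun x => rfl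
  have eτ : ∀ x, τ x = g x := fun x => rfl
  have hL : IsL b ρ := by
    refine ⟨?_, fun x hx => by rw [eρ, f4 x hx], by rw [eρ, f3]; exact hk.ne⟩
    intro x y z hxy hyz h1 h2
    simp only [eρ] at h1 h2
    have hzb : z ≤ b := by
      by_contra hc
      have hc := not_le.1 hc
      rw [f4 z hc] at h2
      rcases le_or_gt y b with h | h
      · exact absurd (h2.trans_le (fle y h)) (not_lt.2 hc.le)
      · rw [f4 y h] at h2; exact absurd h2 (not_lt.2 hyz.le)
    have hyb : y < b := hyz.trans_le hzb
    have hxb : x < b := hxy.trans hyb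
    have hyi : y ≠ i := by
      rintro rfl
      rw [f2] at h1
      exact absurd h1 (not_lt.2 (fle x hxb.le))
    rw [f1 y hyb hyi] at h1 h2
    have hyx : π y < π x := by
      by_cases hxi : x = i
      · rw [hxi]; exact (gl y hyb hyi).trans hi
      · rwa [f1 x hxb hxi] at h1
    rcases hzb.lt_or_eq with hz | hz
    · have hzi : z ≠ i := by
        rintro rfl
        rw [f2] at h2
        exact absurd h2 (not_lt.2 (gl y hyb hyi).le)
      rw [f1 z hz hzi] at h2
      exact hyb.ne (hu x y z hxy hyz hyx h2).2.1
    · rw [hz, f3] at h2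
      exact hyb.ne (hu x y k hxy (hyb.trans hbk) hyx h2).2.1
  have hR : IsR b τ := by
    refine ⟨?_, fun x hx => by rw [eτ, g4 x hx], by rw [eτ, g3]; exact hi.ne'⟩
    intro x y z hxy hyz h1 h2
    simp only [eτ] at h1 h2
    have hxb : b ≤ x := by
      by_contra hc
      have hc := not_le.1 hc
      rw [g4 x hc] at h1
      rcases le_or_gt b y with h | h
      · exact absurd (h1.trans hc) (not_lt.2 (gle y h))
      · rw [g4 y h] at h1; exact absurd h1 (not_lt.2 hxy.le)
    have hyb : b < y := hxb.trans_lt hxy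
    have hzb : b < z := hyb.trans hyz
    have hyk : y ≠ k := by
      rintro rfl
      rw [g2] at h2
      exact absurd h2 (not_lt.2 (gle z hzb.le))
    rw [g1 y hyb hyk] at h1 h2
    have hzy : π z < π y := by
      by_cases hzk : z = k
      · rw [hzk]; exact hk.trans (gg y hyb hyk)
      · rwa [g1 z hzb hzk] at h2
    rcases hxb.lt_or_eq with hx | hx
    · have hxk : x ≠ k := by
        rintro rfl
        rw [g2] at h1
        exact absurd h1 (not_lt.2 (gg y hyb hyk).le)
      rw [g1 x hx hxk] at h1
      exact hyb.ne' (hu x y z hxy hyz h1 hzy).2.1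
    · rw [← hx, g3] at h1
      exact hyb.ne' (hu i y z (hib.trans hyb) hyz h1 hzy).2.1
  refine ⟨ρ, τ, hL, hR, ?_⟩
  ext1 x
  rcases lt_trichotomy x b with h | h | h
  · by_cases hx : x = i
    · rw [hx, glue_lt' hL hR f2, eτ, g3]
    · rw [glue_lt hL hR h (by rw [eρ, f1 x h hx]; exact (gl x h hx).ne), eρ, f1 x h hx]
  · rw [h, glue_b hL hR, hb]
  · by_cases hx : x = k
    · rw [hx, glue_gt' hL hbk g2, eρ, f3]
    · rw [glue_gt hL hR h (by rw [eτ, g1 x h hx]; exact (gg x h hx).ne'), eτ, g1 x h hx]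

open Classical in
lemma card_S (b : Fin n) : (Finset.univ.filter (IsS b)).card =
    (Finset.univ.filter (IsL b)).card * (Finset.univ.filter (IsR b)).card := by
  rw [← Finset.card_product]
  symm
  apply Finset.card_bij (fun p _ => glue b p.1 p.2)
  · intro p hp
    simp only [Finset.mem_product, Finset.mem_filter, Finset.mem_univ, true_and] at hp ⊢
    exact glue_S hp.1 hp.2
  · intro p hp q hq h
    simp only [Finset.mem_product, Finset.mem_filter, Finset.mem_univ, true_and] at hp hq
    have := glue_inj hp.1 hp.2 hq.1 hq.2 h
    exact Prod.ext this.1 this.2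
  · intro π hπ
    simp only [Finset.mem_filter, Finset.mem_univ, true_and] at hπ
    obtain ⟨ρ, τ, hL, hR, h⟩ := S_glue hπ
    exact ⟨(ρ, τ), by simp [hL, hR], h⟩

end

lemma occ_iff {n : ℕ} (π : Equiv.Perm (Fin n)) :
    occ123 π = 1 ↔ ∃ b, IsS b (Fin.revPerm * π) := by
  unfold occ123 IsS
  rw [Finset.card_eq_one]
  constructor
  · rintro ⟨⟨i, b, k⟩, h⟩
    have h' := fun x y z => Finset.ext_iff.1 h (x, y, z)
    simp only [Finset.mem_filter, Finset.mem_univ, true_and, Finset.mem_singleton, Prod.mk.injEq] at h'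
    obtain ⟨a1, a2, a3, a4⟩ := (h' i b k).2 ⟨rfl, rfl, rfl⟩
    refine ⟨b, i, k, a1, a2, by simpa, by simpa, fun x y z hxy hyz h1 h2 => ?_⟩
    exact (h' x y z).1 ⟨hxy, hyz, by simpa using h1, by simpa using h2⟩
  · rintro ⟨b, i, k, a1, a2, a3, a4, hu⟩
    refine ⟨(i, b, k), ?_⟩
    ext ⟨x, y, z⟩
    simp only [Finset.mem_filter, Finset.mem_univ, true_and, Finset.mem_singleton, Prod.mk.injEq]
    constructor
    · rintro ⟨hxy, hyz, h1, h2⟩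
      exact hu x y z hxy hyz (by simpa) (by simpa)
    · rintro ⟨rfl, rfl, rfl⟩
      exact ⟨a1, a2, by simpa using a3, by simpa using a4⟩

open Classical in
lemma card_main (n : ℕ) : {π : Equiv.Perm (Fin n) | occ123 π = 1}.ncard =
    ∑ b : Fin n, (Finset.univ.filter (IsL b)).card * (Finset.univ.filter (IsR b)).card := by
  have h1 : {π : Equiv.Perm (Fin n) | occ123 π = 1}.ncard =
      (Finset.univ.biUnion (fun b : Fin n => Finset.univ.filter (IsS b))).card := by
    rw [Set.ncard_eq_toFinset_card']
    apply Finset.card_bij (fun π _ => Fin.revPerm * π)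
    · intro π hπ
      simp at hπ ⊢
      exact (occ_iff π).1 hπ
    · intro π _ σ _ h
      exact mul_left_cancel h
    · intro π hπ
      simp at hπ
      refine ⟨Fin.revPerm⁻¹ * π, ?_, by simp⟩
      simp only [Set.mem_toFinset, Set.mem_ofPred_eq]
      rw [occ_iff]
      simpa using hπ
  rw [h1, Finset.card_biUnion]
  · exact Finset.sum_congr rfl (fun b _ => card_S b)
  · intro b _ b' _ hne
    simp only [Function.onFun]
    rw [Finset.disjoint_filter]
    rintro π _ ⟨i, k, a1, a2, a3, a4, hu⟩ ⟨i', k', a1', a2', a3', a4', hu'⟩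
    exact hne (hu' i b k a1 a2 a3 a4).2.1

lemma card_Z (n : ℕ) : ({π : Equiv.Perm (Fin n) | occ123 π = 1}.ncard : ℤ) =
    ∑ b ∈ Finset.range n, ((catalan (b+1) : ℤ) - catalan b) * (catalan (n - b) - catalan (n - (b+1))) := by
  classical
  rw [card_main, ← Fin.sum_univ_eq_sum_range (fun b => ((catalan (b+1) : ℤ) - catalan b) * (catalan (n - b) - catalan (n - (b+1))))]
  push_cast
  apply Finset.sum_congr rfl
  intro b _
  have h1 := card_L b
  have h2 := card_R b
  simp only [c_eq] at h1 h2
  rw [← h1, ← h2]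
  push_cast
  ring

lemma cat_conv (n : ℕ) : (catalan (n+1) : ℤ) = ∑ i ∈ Finset.range (n+1), (catalan i : ℤ) * catalan (n - i) := by
  rw [catalan_succ, ← Fin.sum_univ_eq_sum_range (fun i => (catalan i : ℤ) * catalan (n - i))]
  push_cast
  rfl

lemma card_cat (n : ℕ) (hn : 1 ≤ n) : ({π : Equiv.Perm (Fin n) | occ123 π = 1}.ncard : ℤ) =
    catalan (n+2) - 4 * catalan (n+1) + 3 * catalan n := by
  obtain ⟨m, rfl⟩ : ∃ m, n = m + 1 := ⟨n-1, by omega⟩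
  rw [card_Z]
  have e1 := cat_conv (m+1+1)
  have e2 := cat_conv (m+1)
  have e3 := cat_conv m
  have e2' := e2
  rw [Finset.sum_range_succ, Finset.sum_range_succ'] at e1
  rw [Finset.sum_range_succ'] at e2
  rw [Finset.sum_range_succ] at e2'
  simp only [Nat.sub_self, Nat.sub_zero, catalan_zero, Nat.cast_one, one_mul, mul_one] at e1 e2 e2'
  have a1 : ∑ b ∈ Finset.range (m+1), (catalan (b+1) : ℤ) * catalan (m+1-b) = 
     catalan (m+1+2) - 2 * catalan (m+1+1) := by
    rw [e1]
    have : ∀ b, m+1+1-(b+1) = m+1-b := fun b => by omega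
    simp only [this]; ring
  have a2 : ∑ b ∈ Finset.range (m+1), (catalan (b+1) : ℤ) * catalan (m+1-(b+1)) = 
     catalan (m+1+1) - catalan (m+1) := by
    rw [e2]; ring
  have a3 : ∑ b ∈ Finset.range (m+1), (catalan b : ℤ) * catalan (m+1-b) = 
     catalan (m+1+1) - catalan (m+1) := by
    rw [e2']; ring
  have a4 : ∑ b ∈ Finset.range (m+1), (catalan b : ℤ) * catalan (m+1-(b+1)) = catalan (m+1) := by
    rw [e3]
    have : ∀ b, m+1-(b+1) = m-b := fun b => by omega
    simp only [this]
  simp only [sub_mul, mul_sub, Finset.sum_sub_distrib, a1, a2, a3, a4]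
  ring

lemma final (n : ℕ) (hn : 3 ≤ n) : (catalan (n+2) : ℚ) - 4 * catalan (n+1) + 3 * catalan n =
    (6 / (n + 3 : ℚ)) * (Nat.choose (2 * n - 1) (n + 2)) := by
  have c0 := succ_mul_catalan_eq_centralBinom n
  have c1 := succ_mul_catalan_eq_centralBinom (n+1)
  have c2 := succ_mul_catalan_eq_centralBinom (n+2)
  have b0 := Nat.succ_mul_centralBinom_succ n
  have b1 := Nat.succ_mul_centralBinom_succ (n+1)
  have d1 := Nat.choose_succ_right_eq (2*n) n
  have d2 := Nat.choose_succ_right_eq (2*n) (n+1)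
  have d3 := Nat.choose_succ_right_eq (2*n) (n+2)
  have d4 := Nat.add_one_mul_choose_eq (2*n-1) (n+2)
  rw [← Nat.centralBinom_eq_two_mul_choose] at d1
  obtain ⟨m, rfl⟩ : ∃ m, n = m + 3 := ⟨n-3, by omega⟩
  rw [show 2*(m+3)-1+1 = 2*(m+3) by omega] at d4
  rw [show 2*(m+3)-(m+3) = m+3 by omega] at d1
  rw [show 2*(m+3)-(m+3+1) = m+2 by omega] at d2
  rw [show 2*(m+3)-(m+3+2) = m+1 by omega] at d3
  simp only [show m+3+1+1 = m+5 by ring, show m+3+2 = m+5 by ring, show m+5+1 = m+6 by ring] at *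
  generalize Nat.choose (2*(m+3)-1) (m+5) = X at *
  generalize Nat.choose (2*(m+3)) (m+3+1) = Y1 at *
  generalize Nat.choose (2*(m+3)) (m+5) = Y2 at *
  generalize Nat.choose (2*(m+3)) (m+6) = Y3 at *
  generalize catalan (m+3) = C0 at *
  generalize catalan (m+3+1) = C1 at *
  generalize catalan (m+5) = C2 at *
  generalize Nat.centralBinom (m+3) = B0 at *
  generalize Nat.centralBinom (m+3+1) = B1 at *
  generalize Nat.centralBinom (m+5) = B2 at *
  have q0 : ((m:ℚ)+4) * C0 = B0 := by exact_mod_cast c0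
  have q1 : ((m:ℚ)+5) * C1 = B1 := by exact_mod_cast c1
  have q2 : ((m:ℚ)+6) * C2 = B2 := by exact_mod_cast c2
  have r0 : ((m:ℚ)+4) * B1 = 2 * (2 * (m+3) + 1) * B0 := by exact_mod_cast b0
  have r1 : ((m:ℚ)+5) * B2 = 2 * (2 * (m+4) + 1) * B1 := by exact_mod_cast b1
  have t1 : (Y1:ℚ) * (m+4) = B0 * (m+3) := by exact_mod_cast d1
  have t2 : (Y2:ℚ) * (m+5) = Y1 * (m+2) := by exact_mod_cast d2
  have t3 : (Y3:ℚ) * (m+6) = Y2 * (m+1) := by exact_mod_cast d3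
  have t4 : 2 * ((m:ℚ)+3) * X = Y3 * (m+6) := by exact_mod_cast d4
  have hm : (0:ℚ) ≤ m := by positivity
  have p3 : (m:ℚ)+3 ≠ 0 := by positivity
  have p4 : (m:ℚ)+4 ≠ 0 := by positivity
  have p5 : (m:ℚ)+5 ≠ 0 := by positivity
  have p6 : (m:ℚ)+6 ≠ 0 := by positivity
  have eB1 : (B1:ℚ) = 2 * (2 * (m+3) + 1) * B0 / (m+4) := by rw [eq_div_iff p4, ← r0]; ring
  have eB2 : (B2:ℚ) = 2 * (2 * (m+4) + 1) * B1 / (m+5) := by rw [eq_div_iff p5, ← r1]; ring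
  have eC0 : (C0:ℚ) = B0 / (m+4) := by rw [eq_div_iff p4, ← q0]; ring
  have eC1 : (C1:ℚ) = B1 / (m+5) := by rw [eq_div_iff p5, ← q1]; ring
  have eC2 : (C2:ℚ) = B2 / (m+6) := by rw [eq_div_iff p6, ← q2]; ring
  have eY1 : (Y1:ℚ) = B0 * (m+3) / (m+4) := by rw [eq_div_iff p4, ← t1]
  have eY2 : (Y2:ℚ) = Y1 * (m+2) / (m+5) := by rw [eq_div_iff p5, ← t2]
  have eX : (X:ℚ) = Y2 * (m+1) / (2 * (m+3)) := by
    rw [eq_div_iff (by positivity), ← t3, ← t4]; ring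
  rw [eC2, eC1, eC0, eX, eB2, eB1, eY2, eY1]
  push_cast
  rw [show (m:ℚ)+3+3 = m+6 by ring]
  field_simp
  ring
end S321

/-- The number of permutations of length `n ≥ 3` with exactly one occurrence of
the classical pattern 1-2-3 is `(6/(n+3)) * C(2n-1, n+2)`. -/
theorem single_123_count (n : ℕ) (hn : 3 ≤ n) :
    ({π : Equiv.Perm (Fin n) | occ123 π = 1}.ncard : ℚ)
      = (6 / (n + 3 : ℚ)) * (Nat.choose (2 * n - 1) (n + 2)) := by
  rw [← S321.final n hn]
  exact_mod_cast S321.card_cat n (by omega)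
end

section
/- For n ≥ 4, the number of permutations of length n with exactly one occurrence of the classical pattern 1-2-3 and no occurrence of the vincular pattern 1-23 equals (7/(n+3)) * C(2n-2, n+2). -/
open Finset

set_option linter.unusedSimpArgs false

namespace Aux123

/-! ### Numerical part -/

def c : ℕ → ℕ → ℕ
  | 0, _ => 1
  | (m+1), s => ∑ i ∈ range s, c m (i+2)

lemma c_succ (m s : ℕ) : c (m+1) (s+1) = c (m+1) s + c m (s+2) := by
  simp [c, sum_range_succ]

def K : ℕ → ℕ → ℕ
  | 0, _ => 0
  | (m+1), s => c m (s+1)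

lemma K_succ (m s : ℕ) : K (m+1) s = K m (s+1) + c m s := by
  cases m with
  | zero => simp [K, c]
  | succ m => simp only [K]; rw [c_succ]; ring

def D : ℕ → ℕ
  | 0 => 0
  | (m+1) => K m 2

def H : ℕ → ℕ → ℕ
  | 0, _ => 0
  | (m+1), s => ∑ i ∈ range s, H m (i+2) + (∑ i ∈ range s, i) * D m

lemma H_succ (m s : ℕ) : H (m+1) (s+1) = H (m+1) s + H m (s+2) + s * D m := by
  simp only [H, sum_range_succ]; ring

lemma H_closed (m : ℕ) : ∀ s : ℕ, (H (m+2) s : ℤ) =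
    c (m+1) (s+3) - 2 * c m (s+3) - ((s:ℤ)-2) * c m 3 - c (m+1) 3 := by
  induction m with
  | zero => intro s; simp [H, c, D, K]
  | succ m ih =>
    intro s
    induction s with
    | zero => simp [H]
    | succ s ihs =>
      rw [H_succ]
      push_cast
      rw [ihs, ih]
      have h1 := c_succ (m+1) (s+3)
      have h2 := c_succ m (s+3)
      have e1 : s + 1 + 3 = s + 3 + 1 := by ring
      have e2 : s + 2 + 3 = s + 3 + 2 := by ring
      rw [e1, e2, h1, h2]
      simp only [D, K]
      push_cast
      ring

lemma H_one (m : ℕ) : H (m+4) 1 = c m 7 := by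
  have h := H_closed (m+2) 1
  have h1 := c_succ (m+2) 3
  have h2 := c_succ (m+1) 4
  have h3 := c_succ (m+1) 3
  have h4 := c_succ m 5
  have h5 := c_succ m 6
  have h6 := c_succ m 4
  push_cast at h
  norm_num at *
  zify at *
  linarith

lemma c_formula (m : ℕ) : ∀ s : ℕ,
    (c m (s+1) : ℚ) * (m + s + 1) = (s+1) * (Nat.choose (2*m+s) m) := by
  induction m with
  | zero => intro s; simp [c]
  | succ m ih =>
    intro s
    induction s with
    | zero =>
      have h := c_succ m 0
      have h0 : c (m+1) 0 = 0 := by simp [c]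
      rw [h0] at h
      have h1 := ih 1
      have e1 : (Nat.choose (2*(m+1)) (m+1) : ℚ) * (m+1) = Nat.choose (2*m+1) m * (2*m+2) := by
        have := Nat.add_one_mul_choose_eq (2*m+1) m
        have : ((2*m+1+1 : ℕ) : ℚ) * (Nat.choose (2*m+1) m : ℕ)
          = (Nat.choose (2*m+1+1) (m+1) : ℕ) * ((m+1 : ℕ):ℚ) := by exact_mod_cast this
        push_cast at this
        rw [show 2*(m+1) = 2*m+1+1 by ring, ← this]; ring
      rw [h]
      push_cast at *
      simp only [zero_add, add_zero] at *
      have hm : (m:ℚ)+1 ≠ 0 := by positivity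
      apply mul_right_cancel₀ hm
      have h1' : (c m 2 : ℚ) * (m+2) = 2 * (Nat.choose (2*m+1) m) := by
        linarith
      linear_combination (m+1:ℚ) * h1' - e1
    | succ s ihs =>
      have h := c_succ m (s+1)
      have h1 := ih (s+2)
      -- N = 2m+s+2
      have e1 : (Nat.choose (2*(m+1)+(s+1)) (m+1) : ℚ) =
          Nat.choose (2*m+s+2) m + Nat.choose (2*m+s+2) (m+1) := by
        rw [show 2*(m+1)+(s+1) = 2*m+s+2+1 by ring, Nat.choose_succ_succ]; push_cast; rfl
      have e2 : (Nat.choose (2*m+s+2) (m+1) : ℚ) * (m+1) =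
          Nat.choose (2*m+s+2) m * (m+s+2) := by
        have := Nat.choose_succ_right_eq (2*m+s+2) m
        rw [show 2*m+s+2-m = m+s+2 by omega] at this
        exact_mod_cast this
      rw [show 2*(m+1)+s = 2*m+s+2 by ring] at ihs
      rw [show 2*m+(s+2) = 2*m+s+2 by ring] at h1
      rw [e1, h]
      push_cast at *
      have hA : ((m:ℚ)+s+2) ≠ 0 := by positivity
      have hB : ((m:ℚ)+s+3) ≠ 0 := by positivity
      have hC : ((m:ℚ)+1) ≠ 0 := by positivity
      have q1 : (c (m+1) (s+1) : ℚ) = (s+1) * Nat.choose (2*m+s+2) (m+1) / (m+s+2) := by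
        rw [eq_div_iff hA]; linarith
      have q2 : (c m (s+1+2) : ℚ) = (s+3) * Nat.choose (2*m+s+2) m / (m+s+3) := by
        rw [eq_div_iff hB, show s+1+2 = s+2+1 by ring]; linarith
      have q3 : (Nat.choose (2*m+s+2) (m+1) : ℚ) = Nat.choose (2*m+s+2) m * (m+s+2) / (m+1) := by
        rw [eq_div_iff hC]; linarith
      rw [q1, q2, q3]
      field_simp
      ring

/-! ### Profiles -/

structure Prof where
  occ : ℕ
  occ' : ℕ
  g : ℕ → ℕ
  g' : ℕ → ℕ
  hd : ℕ

def step (u : ℕ) (P : Prof) : Prof where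
  occ := P.occ + P.g u
  occ' := P.occ' + P.g' u
  g := fun x => if x ≤ u then P.g x else u + P.g (x-1)
  g' := fun x => if x ≤ u then P.g' x else (if P.hd < u then 1 else 0) + P.g' (x-1)
  hd := u

def E : ℕ → ℕ → Prof → ℕ
  | 0, _, P => if P.occ = 1 ∧ P.occ' = 0 then 1 else 0
  | (m+1), n, P => ∑ u ∈ range (n+1), E m (n+1) (step u P)

lemma E_dead (m : ℕ) : ∀ n P, (2 ≤ P.occ ∨ 1 ≤ P.occ') → E m n P = 0 := by
  induction m with
  | zero => intro n P h; simp only [E]; rw [if_neg]; omega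
  | succ m ih =>
    intro n P h
    simp only [E]
    apply sum_eq_zero
    intro u _
    apply ih
    simp only [step]; omega

structure InvO (n : ℕ) (P : Prof) (s : ℕ) : Prop where
  occ : P.occ = 1
  occ' : P.occ' = 0
  s1 : 1 ≤ s
  sn : s ≤ n + 1
  g0 : ∀ x, x ≤ n → (P.g x = 0 ↔ x < s)
  le : ∀ x, P.g' x ≤ P.g x

lemma sum_split (f : ℕ → ℕ) (s t r : ℕ) : ∑ u ∈ range (s+1+t+r), f u =
    f 0 + ∑ i ∈ range s, f (i+1) + ∑ i ∈ range t, f (s+1+i) + ∑ i ∈ range r, f (s+1+t+i) := by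
  rw [sum_range_add, sum_range_add, sum_range_succ']; ring

lemma step_le (u : ℕ) (P : Prof) (h : ∀ x, P.g' x ≤ P.g x) :
    ∀ x, (step u P).g' x ≤ (step u P).g x := by
  intro x
  simp only [step]
  have h1 := h x
  have h2 := h (x-1)
  split_ifs <;> omega

lemma E_O (m : ℕ) : ∀ n P s, InvO n P s → E m n P = c m s := by
  induction m with
  | zero => intro n P s h; simp [E, c, h.occ, h.occ']
  | succ m ih =>
    intro n P s h
    obtain ⟨s, rfl⟩ : ∃ k, s = k + 1 := ⟨s-1, by have := h.s1; omega⟩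
    obtain ⟨r, hr⟩ : ∃ r, n + 1 = s + 1 + 0 + r := ⟨n - s, by have := h.sn; omega⟩
    simp only [E]
    rw [hr, sum_split]
    have e0 : E m (s+1+0+r) (step 0 P) = c m (s+2) := by
      apply ih
      have g0 := h.g0
      have l0 := h.le 0
      have z0 := (g0 0 (by omega)).2 (by omega)
      refine ⟨?_, ?_, by omega, by omega, ?_, step_le _ _ h.le⟩
      · simp [step, h.occ, z0]
      · simp only [step, h.occ']; omega
      · intro x hxn
        have a := g0 x; have b := g0 (x-1)
        simp only [step]; split_ifs <;> omega
    have e1 : ∀ i ∈ range s, E m (s+1+0+r) (step (i+1) P) = c m (i+2) := by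
      intro i hi
      rw [mem_range] at hi
      apply ih
      have g0 := h.g0
      have l0 := h.le (i+1)
      have z0 := (g0 (i+1) (by omega)).2 (by omega)
      refine ⟨?_, ?_, by omega, by omega, ?_, step_le _ _ h.le⟩
      · simp [step, h.occ, z0]
      · simp only [step, h.occ']; omega
      · intro x hxn
        have a := g0 x; have b := g0 (x-1)
        simp only [step]; split_ifs <;> omega
    have e2 : ∀ i ∈ range r, E m (s+1+0+r) (step (s+1+0+i) P) = 0 := by
      intro i hi
      apply E_dead
      left
      rw [mem_range] at hi
      have a := h.g0 (s+1+0+i)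
      have b := h.occ
      simp only [step]; omega
    rw [e0, sum_congr rfl e1, sum_congr rfl e2]
    simp [c, sum_range_succ]; ring

structure InvA (n : ℕ) (P : Prof) (s t : ℕ) : Prop where
  occ : P.occ = 0
  occ' : P.occ' = 0
  s1 : 1 ≤ s
  sn : s + t ≤ n + 1
  g0 : ∀ x, x ≤ n → (P.g x = 0 ↔ x < s)
  g1 : ∀ x, x ≤ n → ((P.g x = 1 ∧ P.g' x = 0) ↔ (s ≤ x ∧ x < s + t))
  le : ∀ x, P.g' x ≤ P.g x

lemma E_A (m : ℕ) : ∀ n P s t, InvA n P s t →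
    E m n P = H m s + (if P.hd = 0 then 0 else (s-1) * D m) + t * K m s := by
  induction m with
  | zero => intro n P s t h; simp [E, h.occ, H, D, K]
  | succ m ih =>
    intro n P s t h
    obtain ⟨s, rfl⟩ : ∃ k, s = k + 1 := ⟨s-1, by have := h.s1; omega⟩
    obtain ⟨r, hr⟩ : ∃ r, n + 1 = s + 1 + t + r := ⟨n - s - t, by have := h.sn; omega⟩
    simp only [E]
    rw [hr, sum_split]
    have g0 := h.g0
    have g1 := h.g1
    have le := h.le
    have e0 : E m (s+1+t+r) (step 0 P) = H m (s+2) + t * K m (s+2) := by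
      rw [ih _ _ (s+2) t]
      · simp [step]
      have l0 := h.le 0
      have z0 := (g0 0 (by omega)).2 (by omega)
      refine ⟨?_, ?_, by omega, by omega, ?_, ?_, step_le _ _ h.le⟩
      · simp [step, h.occ, z0]
      · simp only [step, h.occ']; omega
      · intro x hxn
        have a := g0 x; have b := g0 (x-1)
        simp only [step]; split_ifs <;> omega
      · intro x hxn
        have a := g0 x; have b := g0 (x-1)
        have a1 := g1 x; have b1 := g1 (x-1)
        simp only [step]
        by_cases hx : x = 0
        · subst hx; simp [z0]
        · simp [hx]; omega
    have e1 : ∀ i ∈ range s, E m (s+1+t+r) (step (i+1) P) =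
        H m (i+2) + (i+1) * D m + (if i = 0 then (if P.hd = 0 then 0 else s * K m 2) else 0) := by
      intro i hi
      rw [mem_range] at hi
      have l0 := h.le (i+1)
      have z0 := (g0 (i+1) (by omega)).2 (by omega)
      rw [ih _ _ (i+2) (if i = 0 then (if P.hd = 0 then 0 else s) else 0)]
      · simp only [step]
        by_cases hi0 : i = 0
        · subst hi0; split_ifs <;> simp_all
        · simp [hi0]
      refine ⟨?_, ?_, by omega, ?_, ?_, ?_, step_le _ _ h.le⟩
      · simp [step, h.occ, z0]
      · simp only [step, h.occ']; omega
      · split_ifs <;> omega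
      · intro x hxn
        have a := g0 x; have b := g0 (x-1)
        simp only [step]; split_ifs <;> omega
      · intro x hxn
        have a := g0 x; have b := g0 (x-1)
        have l2 := le (x-1)
        simp only [step]
        split_ifs <;> omega
    have e2 : ∀ i ∈ range t, E m (s+1+t+r) (step (s+1+i) P) = c m (s+1) := by
      intro i hi
      rw [mem_range] at hi
      apply E_O
      have z := (g1 (s+1+i) (by omega)).2 (by omega)
      refine ⟨?_, ?_, by omega, by omega, ?_, step_le _ _ h.le⟩
      · simp [step, h.occ, z.1]
      · simp [step, h.occ', z.2]
      · intro x hxn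
        have a := g0 x; have b := g0 (x-1)
        simp only [step]; split_ifs <;> omega
    have e3 : ∀ i ∈ range r, E m (s+1+t+r) (step (s+1+t+i) P) = 0 := by
      intro i hi
      apply E_dead
      rw [mem_range] at hi
      have a := g0 (s+1+t+i)
      have b := g1 (s+1+t+i)
      have d := h.occ
      have d' := h.occ'
      simp only [step]; omega
    rw [e0, sum_congr rfl e1, sum_congr rfl e2, sum_congr rfl e3, K_succ]
    have e4 : ∑ i ∈ range s, (if i = 0 then (if P.hd = 0 then 0 else s * K m 2) else 0)
        = if P.hd = 0 then 0 else s * K m 2 := by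
      rw [sum_ite_eq' (range s) 0 (fun _ => if P.hd = 0 then 0 else s * K m 2)]
      by_cases hs : s = 0 <;> simp [hs, Nat.pos_iff_ne_zero]
    rw [sum_add_distrib, e4, sum_add_distrib, ← sum_mul]
    simp only [H, D, sum_range_succ _ s, sum_const, card_range, smul_eq_mul]
    have e5 : ∑ i ∈ range s, (i+1) = ∑ i ∈ range s, i + s := by
      rw [sum_add_distrib]; simp
    rw [e5]
    simp only [Nat.add_sub_cancel]
    ring

/-! ### Permutations -/

def gg {n : ℕ} (π : Equiv.Perm (Fin n)) (x : ℕ) : ℕ :=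
  ∑ j : Fin n, ∑ k : Fin n, if j < k ∧ π j < π k ∧ n ≤ x + (π j : ℕ) then 1 else 0

def gg' {n : ℕ} (π : Equiv.Perm (Fin n)) (x : ℕ) : ℕ :=
  ∑ j : Fin n, ∑ k : Fin n,
    if j < k ∧ (k : ℕ) = (j : ℕ) + 1 ∧ π j < π k ∧ n ≤ x + (π j : ℕ) then 1 else 0

def hd : {n : ℕ} → Equiv.Perm (Fin n) → ℕ
  | 0, _ => 0
  | (n+1), π => n - (π 0 : ℕ)

def prof {n : ℕ} (π : Equiv.Perm (Fin n)) : Prof where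
  occ := occ123 π
  occ' := occ1_23 π
  g := gg π
  g' := gg' π
  hd := hd π

def pcons {n : ℕ} (u : Fin (n+1)) (π : Equiv.Perm (Fin n)) : Equiv.Perm (Fin (n+1)) :=
  (finSuccEquiv n).trans ((Equiv.optionCongr π).trans (finSuccEquiv' u.rev).symm)

@[simp] lemma pcons_zero {n : ℕ} (u : Fin (n+1)) (π : Equiv.Perm (Fin n)) :
    pcons u π 0 = u.rev := by
  simp [pcons]

@[simp] lemma pcons_succ {n : ℕ} (u : Fin (n+1)) (π : Equiv.Perm (Fin n)) (i : Fin n) :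
    pcons u π i.succ = u.rev.succAbove (π i) := by
  simp [pcons]

lemma pcons_bij (n : ℕ) : Function.Bijective
    (fun p : Fin (n+1) × Equiv.Perm (Fin n) => pcons p.1 p.2) := by
  rw [Fintype.bijective_iff_injective_and_card]
  constructor
  · rintro ⟨u, π⟩ ⟨w, σ⟩ h
    simp only at h
    have h0 : u.rev = w.rev := by
      rw [← pcons_zero u π, h, pcons_zero]
    have h0 : u = w := Fin.rev_injective h0
    subst h0
    have : π = σ := by
      ext i
      have := congrArg (fun f => f i.succ) h
      simp only [pcons_succ] at this
      rw [Fin.succAbove_right_injective this]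
    rw [this]
  · simp [Fintype.card_prod, Fintype.card_perm, Nat.factorial_succ]

lemma sum_pcons (n : ℕ) (f : Equiv.Perm (Fin (n+1)) → ℕ) :
    ∑ π, f π = ∑ π : Equiv.Perm (Fin n), ∑ u : Fin (n+1), f (pcons u π) := by
  rw [sum_comm, ← Fintype.sum_prod_type', ← (pcons_bij n).sum_comp f]

lemma rev_lt {n : ℕ} (u : Fin (n+1)) (a : Fin n) :
    u.rev < u.rev.succAbove a ↔ n ≤ (u : ℕ) + (a : ℕ) := by
  rw [Fin.lt_succAbove_iff_le_castSucc, Fin.le_def]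
  simp only [Fin.val_rev, Fin.val_castSucc]
  omega

lemma le_sA {n : ℕ} (u : Fin (n+1)) (a : Fin n) (x : ℕ) :
    n + 1 ≤ x + (u.rev.succAbove a : ℕ) ↔
      (if x ≤ (u:ℕ) then n ≤ x + (a:ℕ) else n ≤ (x-1) + (a:ℕ)) := by
  have := u.2
  have := a.2
  rcases lt_or_ge (u.rev) (u.rev.succAbove a) with h | h
  · have h' := (rev_lt u a).1 h
    rw [Fin.lt_succAbove_iff_le_castSucc] at h
    rw [Fin.succAbove_of_le_castSucc _ _ h]
    simp only [Fin.val_succ]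
    split_ifs <;> omega
  · have h' := (rev_lt u a).not.1 (not_lt.2 h)
    have h2 : a.castSucc < u.rev := by
      by_contra hc
      exact absurd ((Fin.lt_succAbove_iff_le_castSucc _ _).2 (not_lt.1 hc)) (not_lt.2 h)
    rw [Fin.succAbove_of_castSucc_lt _ _ h2]
    simp only [Fin.val_castSucc]
    split_ifs <;> omega

lemma occ123_eq {n : ℕ} (π : Equiv.Perm (Fin n)) : occ123 π =
    ∑ i : Fin n, ∑ j : Fin n, ∑ k : Fin n,
      if i < j ∧ j < k ∧ π i < π j ∧ π j < π k then 1 else 0 := by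
  rw [occ123, card_filter, Fintype.sum_prod_type]
  simp_rw [Fintype.sum_prod_type]

lemma occ1_23_eq {n : ℕ} (π : Equiv.Perm (Fin n)) : occ1_23 π =
    ∑ i : Fin n, ∑ j : Fin n, ∑ k : Fin n,
      if i < j ∧ j < k ∧ (k:ℕ) = (j:ℕ) + 1 ∧ π i < π j ∧ π j < π k then 1 else 0 := by
  rw [occ1_23, card_filter, Fintype.sum_prod_type]
  simp_rw [Fintype.sum_prod_type]

lemma occ_pcons {n : ℕ} (u : Fin (n+1)) (π : Equiv.Perm (Fin n)) :
    occ123 (pcons u π) = occ123 π + gg π u := by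
  rw [occ123_eq, occ123_eq, gg]
  simp only [Fin.sum_univ_succ, pcons_zero, pcons_succ, rev_lt, Fin.succ_lt_succ_iff,
    Fin.succAbove_lt_succAbove_iff, lt_irrefl, Fin.not_lt_zero, Fin.succ_pos, false_and, and_false,
    true_and, if_false, sum_const_zero, zero_add, add_zero]
  rw [add_comm]
  congr 1
  refine sum_congr rfl fun j _ => sum_congr rfl fun k _ => ?_
  congr 1
  simp only [eq_iff_iff]; tauto

lemma occ'_pcons {n : ℕ} (u : Fin (n+1)) (π : Equiv.Perm (Fin n)) :
    occ1_23 (pcons u π) = occ1_23 π + gg' π u := by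
  rw [occ1_23_eq, occ1_23_eq, gg']
  simp only [Fin.sum_univ_succ, pcons_zero, pcons_succ, rev_lt, Fin.succ_lt_succ_iff,
    Fin.succAbove_lt_succAbove_iff, lt_irrefl, Fin.not_lt_zero, Fin.succ_pos, false_and, and_false,
    true_and, if_false, sum_const_zero, zero_add, add_zero, Fin.val_succ, Nat.add_right_cancel_iff]
  rw [add_comm]
  congr 1
  refine sum_congr rfl fun j _ => sum_congr rfl fun k _ => ?_
  congr 1
  simp only [eq_iff_iff]; tauto

lemma count_u {n : ℕ} (u : Fin (n+1)) (π : Equiv.Perm (Fin n)) :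
    (∑ k : Fin n, if n ≤ (u:ℕ) + (π k : ℕ) then 1 else 0) = (u:ℕ) := by
  rw [Equiv.sum_comp π (fun a => if n ≤ (u:ℕ) + (a:ℕ) then 1 else 0)]
  rw [Fin.sum_univ_eq_sum_range (fun a => if n ≤ (u:ℕ) + a then 1 else 0) n, ← card_filter]
  have hu := u.2
  have : filter (fun a => n ≤ (u:ℕ) + a) (range n) = Ico (n - u) n := by
    ext a; simp only [mem_filter, mem_range, mem_Ico]; omega
  rw [this, Nat.card_Ico]; omega

lemma gg_pcons {n : ℕ} (u : Fin (n+1)) (π : Equiv.Perm (Fin n)) (x : ℕ) :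
    gg (pcons u π) x = if x ≤ (u:ℕ) then gg π x else u + gg π (x-1) := by
  have hu := u.2
  have hv : n + 1 ≤ x + (u.rev : ℕ) ↔ ¬ x ≤ (u:ℕ) := by
    simp only [Fin.val_rev]; omega
  unfold gg
  simp only [Fin.sum_univ_succ, pcons_zero, pcons_succ, rev_lt, Fin.succ_lt_succ_iff,
    Fin.succAbove_lt_succAbove_iff, lt_irrefl, Fin.not_lt_zero, Fin.succ_pos, false_and, and_false,
    true_and, if_false, sum_const_zero, zero_add, add_zero, le_sA, hv]
  by_cases hx : x ≤ (u:ℕ)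
  · simp [hx]
  · simp only [hx, not_false_eq_true, and_true, if_false]
    rw [count_u]

lemma gg'_pcons {n : ℕ} (u : Fin (n+1)) (π : Equiv.Perm (Fin n)) (x : ℕ) :
    gg' (pcons u π) x = if x ≤ (u:ℕ) then gg' π x
      else (if hd π < (u:ℕ) then 1 else 0) + gg' π (x-1) := by
  have hu := u.2
  have hv : n + 1 ≤ x + (u.rev : ℕ) ↔ ¬ x ≤ (u:ℕ) := by
    simp only [Fin.val_rev]; omega
  have hh : (∑ k : Fin n, if (k:ℕ) = 0 ∧ n ≤ (u:ℕ) + (π k : ℕ) then 1 else 0) =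
      if hd π < (u:ℕ) then 1 else 0 := by
    cases n with
    | zero => simp
    | succ n =>
      rw [Fin.sum_univ_succ]
      have := (π 0).2
      have e : (n + 1 ≤ (u:ℕ) + (π 0 : ℕ)) ↔ n - (π 0 : ℕ) < u := by omega
      by_cases hq : n - (π 0 : ℕ) < u <;> simp [hd, e, hq]
  unfold gg'
  simp only [Fin.sum_univ_succ, pcons_zero, pcons_succ, rev_lt, Fin.succ_lt_succ_iff,
    Fin.succAbove_lt_succAbove_iff, lt_irrefl, Fin.not_lt_zero, Fin.succ_pos, false_and, and_false,
    true_and, if_false, sum_const_zero, zero_add, add_zero, le_sA, hv, Fin.val_succ,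
    Nat.add_right_cancel_iff, Fin.val_zero, Nat.add_eq_right]
  by_cases hx : x ≤ (u:ℕ)
  · simp [hx]
  · simp only [hx, not_false_eq_true, and_true, if_false]
    rw [hh]

lemma prof_pcons {n : ℕ} (u : Fin (n+1)) (π : Equiv.Perm (Fin n)) :
    prof (pcons u π) = step u (prof π) := by
  have hu := u.2
  simp only [prof, step, Prof.mk.injEq]
  refine ⟨occ_pcons u π, occ'_pcons u π, funext fun x => gg_pcons u π x,
    funext fun x => gg'_pcons u π x, ?_⟩
  simp only [hd, pcons_zero, Fin.val_rev]; omega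

lemma sum_E (n : ℕ) : ∀ m, ∑ π : Equiv.Perm (Fin n), E m n (prof π)
    = E (m+n) 0 (prof (1 : Equiv.Perm (Fin 0))) := by
  induction n with
  | zero =>
    intro m
    rw [Fintype.sum_unique]
    congr 2
  | succ n ih =>
    intro m
    rw [sum_pcons, show m + (n+1) = (m+1) + n by ring, ← ih]
    refine sum_congr rfl fun π _ => ?_
    simp only [E]
    rw [← Fin.sum_univ_eq_sum_range (fun u => E m (n+1) (step u (prof π)))]
    simp only [prof_pcons]

lemma count (n : ℕ) : {π : Equiv.Perm (Fin n) | occ123 π = 1 ∧ occ1_23 π = 0}.ncard = H n 1 := by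
  have h := sum_E n 0
  have h' : ∑ π : Equiv.Perm (Fin n), E 0 n (prof π) =
      (univ.filter fun π : Equiv.Perm (Fin n) => occ123 π = 1 ∧ occ1_23 π = 0).card := by
    rw [card_filter]
    rfl
  rw [h', zero_add] at h
  rw [Set.ncard_eq_toFinset_card', Set.toFinset_ofPred, h, E_A n 0 _ 1 0]
  · simp [prof, hd]
  · constructor <;> simp [prof, occ123_eq, occ1_23_eq, gg, gg']

end Aux123

/-- The number of permutations of length `n ≥ 4` with exactly one occurrence of
1-2-3 and no occurrence of the vincular pattern 1-23 is
`(7/(n+3)) * C(2n-2, n+2)`. -/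
theorem single_123_no_1_23_count (n : ℕ) (hn : 4 ≤ n) :
    ({π : Equiv.Perm (Fin n) | occ123 π = 1 ∧ occ1_23 π = 0}.ncard : ℚ)
      = (7 / (n + 3 : ℚ)) * (Nat.choose (2 * n - 2) (n + 2)) := by
  obtain ⟨m, rfl⟩ : ∃ m, n = m + 4 := ⟨n - 4, by omega⟩
  rw [Aux123.count, Aux123.H_one]
  have h := Aux123.c_formula m 6
  have e : Nat.choose (2 * (m+4) - 2) (m + 4 + 2) = Nat.choose (2*m+6) m := by
    rw [show 2 * (m+4) - 2 = 2*m+6 by omega]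
    exact Nat.choose_symm_of_eq_add (by omega)
  rw [e]
  push_cast at *
  have h7 : (m:ℚ) + 4 + 3 ≠ 0 := by positivity
  field_simp
  norm_num at h
  linarith
end

section
/- For n ≥ 5, the number of permutations of length n with exactly one occurrence of the classical pattern 1-2-3, no occurrence of the vincular pattern 1-23, and no occurrence of the vincular pattern 12-3, equals (8/(n+3)) * C(2n-3, n+2). -/
namespace Single123

open PowerSeries in
theorem conv_coeff (c : PowerSeries ℚ) (h0 : constantCoeff c = 1) (hc : c ^ 2 * X + 1 = c) (k : ℕ) :
    ∀ r : ℕ, coeff k (c ^ r) * (2 * k + r) = r * (Nat.choose (2 * k + r) k) := by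
  induction k with
  | zero => intro r; simp [h0]
  | succ k ih =>
    intro r
    induction r with
    | zero => simp [coeff_one]
    | succ r ihr =>
      have e : c ^ (r + 1) = c ^ r + c ^ (r + 2) * X := by
        calc c ^ (r+1) = c ^ r * c := pow_succ _ _
          _ = c ^ r * (c ^ 2 * X + 1) := by rw [hc]
          _ = _ := by ring
      have e2 : coeff (k+1) (c ^ (r+1)) = coeff (k+1) (c ^ r) + coeff k (c ^ (r+2)) := by
        rw [e, map_add, coeff_succ_mul_X]
      rw [e2]
      have h1 := ih (r+2)
      have f1 : 2 * k + (r + 2) = 2 * k + r + 2 := by ring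
      have f2 : 2 * (k+1) + r = 2 * k + r + 2 := by ring
      have f3 : 2 * (k+1) + (r + 1) = 2 * k + r + 2 + 1 := by ring
      rw [f1] at h1
      rw [f2] at ihr
      rw [f3, Nat.choose_succ_succ]
      have hA := Nat.choose_succ_right_eq (2 * k + r + 2) k
      have f4 : 2 * k + r + 2 - k = k + r + 2 := by omega
      rw [f4] at hA
      have hA' : (Nat.choose (2 * k + r + 2) (k+1) : ℚ) * (k+1) = Nat.choose (2 * k + r + 2) k * (k + r + 2) := by
        exact_mod_cast hA
      simp only [Nat.succ_eq_add_one]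
      push_cast at *
      generalize (Nat.choose (2 * k + r + 2) (k+1) : ℚ) = B at *
      generalize (Nat.choose (2 * k + r + 2) k : ℚ) = A at *
      generalize coeff (k+1) (c ^ r) = P at *
      generalize coeff k (c ^ (r+2)) = Q at *
      have hk : (k + 1 : ℚ) ≠ 0 := by positivity
      have hd : (2 * k + r + 2 : ℚ) ≠ 0 := by positivity
      have hP : P = r * B / (2 * k + r + 2) := by
        rw [eq_div_iff hd]; linarith
      have hQ : Q = (r + 2) * A / (2 * k + r + 2) := by
        rw [eq_div_iff hd]; linarith
      have hB : B = A * (k + r + 2) / (k + 1) := by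
        rw [eq_div_iff hk]; linarith
      rw [hP, hQ, hB]
      field_simp
      ring

open PowerSeries in
theorem conv_sum (G : ℕ → ℚ) (hG : ∀ k, G k * (k + 4) = 4 * Nat.choose (2 * k + 3) k) (m : ℕ) :
    ∑ i ∈ Finset.range (m + 1), G i * G (m - i)
      = (8 / (m + 8 : ℚ)) * (Nat.choose (2 * m + 7) (m + 7)) := by
  set c : PowerSeries ℚ := (catalanSeries).map (Nat.castRingHom ℚ) with hcdef
  have h0 : constantCoeff c = 1 := by
    rw [hcdef, ← coeff_zero_eq_constantCoeff_apply, coeff_map, catalanSeries_coeff]; simp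
  have hc : c ^ 2 * X + 1 = c := by
    have := congrArg (PowerSeries.map (Nat.castRingHom ℚ)) catalanSeries_sq_mul_X_add_one
    simpa using this
  have key : ∀ r k : ℕ, coeff k (c ^ (r + 1)) * (k + r + 1) = (r + 1) * Nat.choose (2 * k + r) k := by
    intro r k
    have h := conv_coeff c h0 hc k (r + 1)
    have h2 := Nat.choose_mul_succ_eq (2 * k + r) k
    have f : 2 * k + r + 1 - k = k + r + 1 := by omega
    rw [f] at h2
    have h3 : (Nat.choose (2 * k + r) k : ℚ) * (2 * k + r + 1) = Nat.choose (2 * k + r + 1) k * (k + r + 1) := by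
      exact_mod_cast h2
    have hd : (2 * k + r + 1 : ℚ) ≠ 0 := by positivity
    rw [← add_assoc] at h
    push_cast at h
    apply mul_right_cancel₀ hd
    linear_combination (k + r + 1 : ℚ) * h - (r + 1 : ℚ) * h3
  have hGc : ∀ k, G k = coeff k (c ^ 4) := by
    intro k
    have h1 := hG k
    have h2 := key 3 k
    have hd : (k + 4 : ℚ) ≠ 0 := by positivity
    apply mul_right_cancel₀ hd
    push_cast at h2
    linear_combination h1 - h2
  have e : c ^ (7 + 1) = c ^ 4 * c ^ 4 := by ring
  have h7 := key 7 m
  rw [e, coeff_mul, Finset.Nat.sum_antidiagonal_eq_sum_range_succ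
    (fun i j => coeff i (c ^ 4) * coeff j (c ^ 4))] at h7
  simp only [← hGc] at h7
  have hs : Nat.choose (2 * m + 7) m = Nat.choose (2 * m + 7) (m + 7) := by
    rw [← Nat.choose_symm_of_eq_add]; omega
  rw [hs] at h7
  have hd : (m + 8 : ℚ) ≠ 0 := by positivity
  field_simp
  push_cast at h7
  rw [Nat.succ_eq_add_one] at h7
  linear_combination h7

/-- Ballot numbers from the recurrences. -/
theorem ballot_closed (F : ℕ → ℕ → ℕ) (h00 : F 0 0 = 1)
    (hz : ∀ n, F (n+1) 0 = F n 0)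
    (hs : ∀ n p, p + 1 ≤ n → F (n+1) (p+1) = F (n+1) p + F n (p+1))
    (hd : ∀ n, F (n+1) (n+1) = F (n+1) n) (n : ℕ) :
    ∀ p, p ≤ n → (F n p : ℚ) * (n + 1) = Nat.choose (n + p) p * (n + 1 - p) := by
  induction n with
  | zero => intro p hp; obtain rfl : p = 0 := by omega
            simp [h00]
  | succ n ih =>
    have main : ∀ p, p ≤ n → (F (n+1) p : ℚ) * (n + 2) = Nat.choose (n + 1 + p) p * (n + 2 - p) := by
      intro p
      induction p with
      | zero =>
        intro _
        have := ih 0 (by omega)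
        rw [hz]
        simp at this ⊢
        have hd : (n + 1 : ℚ) ≠ 0 := by positivity
        have : (F n 0 : ℚ) = 1 := by
          apply mul_right_cancel₀ hd; linarith
        rw [this]; ring
      | succ p ihp =>
        intro hp
        have h1 := ihp (by omega)
        have h2 := ih (p+1) hp
        rw [hs n p hp]
        have f1 : n + 1 + p = n + p + 1 := by ring
        have f2 : n + 1 + (p + 1) = n + p + 1 + 1 := by ring
        have f3 : n + (p + 1) = n + p + 1 := by ring
        rw [f1] at h1
        rw [f3] at h2
        rw [f2, Nat.choose_succ_succ]
        have hA := Nat.choose_succ_right_eq (n + p + 1) p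
        have f4 : n + p + 1 - p = n + 1 := by omega
        rw [f4] at hA
        have hA' : (Nat.choose (n + p + 1) (p+1) : ℚ) * (p+1) = Nat.choose (n + p + 1) p * (n + 1) := by
          exact_mod_cast hA
        simp only [Nat.succ_eq_add_one]
        push_cast at *
        generalize (Nat.choose (n + p + 1) (p+1) : ℚ) = B at *
        generalize (Nat.choose (n + p + 1) p : ℚ) = A at *
        generalize (F (n+1) p : ℚ) = P at *
        generalize (F n (p+1) : ℚ) = Q at *
        have hk : (p + 1 : ℚ) ≠ 0 := by positivity
        have hd1 : (n + 1 : ℚ) ≠ 0 := by positivity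
        have hd2 : (n + 2 : ℚ) ≠ 0 := by positivity
        have hP : P = A * (n + 2 - p) / (n + 2) := by
          rw [eq_div_iff hd2]; linarith
        have hB : B = A * (n + 1) / (p + 1) := by
          rw [eq_div_iff hk]; linarith
        have hQ : Q = B * (n + 1 - (p + 1)) / (n + 1) := by
          rw [eq_div_iff hd1]; linarith
        rw [hP, hQ, hB]
        field_simp
        ring
    intro p hp
    rcases Nat.lt_or_ge n p with h | h
    · obtain rfl : p = n + 1 := by omega
      have h1 := main n le_rfl
      rw [hd]
      have hA := Nat.choose_succ_right_eq (n + 1 + n) n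
      have hB := Nat.choose_succ_succ (n + 1 + n) n
      have f4 : n + 1 + n - n = n + 1 := by omega
      rw [f4] at hA
      have hA' : Nat.choose (n + 1 + n) (n + 1) = Nat.choose (n + 1 + n) n := by
        exact Nat.eq_of_mul_eq_mul_right (Nat.succ_pos n) hA
      have f5 : n + 1 + (n + 1) = n + 1 + n + 1 := by ring
      rw [f5, hB, Nat.succ_eq_add_one, hA']
      push_cast
      linear_combination h1
    · have := main p h
      push_cast
      linear_combination this

open Equiv

def Supp (l r : ℤ) (π : Perm ℤ) : Prop := ∀ x, (x < l ∨ r ≤ x) → π x = x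
def Av (π : Perm ℤ) : Prop := ∀ x y z, x < y → y < z → π y < π x → π z < π y → False
def Fs (n p : ℕ) : Set (Perm ℤ) :=
  {π | Supp 0 n π ∧ Av π ∧ ∀ x y : ℤ, (p:ℤ) ≤ x → x < y → y < n → π x < π y}
def Ls (n p : ℕ) : Set (Perm ℤ) :=
  {π | Supp 0 (n+1) π ∧ Av π ∧ ∃ q : ℤ, q < p ∧ π q = n}

theorem Supp.mem {l r : ℤ} {π : Perm ℤ} (h : Supp l r π) (x : ℤ) (h1 : l ≤ x) (h2 : x < r) :
    l ≤ π x ∧ π x < r := by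
  by_contra hc
  have := π.injective (h (π x) (by omega))
  omega

theorem Supp.inv {l r : ℤ} {π : Perm ℤ} (h : Supp l r π) (x y : ℤ) (hxy : x < y) (hp : π y < π x) :
    l ≤ x ∧ y < r := by
  constructor
  · by_contra hc
    have h1 := h x (by omega)
    have := π.injective (h (π y) (by omega))
    omega
  · by_contra hc
    have h1 := h y (by omega)
    have := π.injective (h (π x) (by omega))
    omega

theorem supp_finite (l r : ℤ) : {π | Supp l r π}.Finite := by
  have : Finite {x : ℤ // l ≤ x ∧ x < r} := (Set.finite_Ico l r).to_subtype
  apply (Set.finite_range (Perm.ofSubtype (p := fun x : ℤ => l ≤ x ∧ x < r))).subset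
  intro π h
  refine ⟨π.subtypePerm ?_, Perm.ofSubtype_subtypePerm _ ?_⟩
  · intro x
    constructor
    · intro hx
      by_contra hc
      have := h x (by omega)
      omega
    · intro hx
      exact Supp.mem h x hx.1 hx.2
  · intro x hx
    by_contra hc
    exact hx (h x (by omega))

theorem Fs_finite (n p) : (Fs n p).Finite := (supp_finite 0 n).subset fun _ h => h.1
theorem Ls_finite (n p) : (Ls n p).Finite := (supp_finite 0 (n+1)).subset fun _ h => h.1

/-- `q ↦ n`, shifting down what lies in between. -/
def ins (q n : ℤ) (h : q ≤ n) : Perm ℤ where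
  toFun x := if x < q ∨ n < x then x else if x = q then n else x - 1
  invFun y := if y < q ∨ n < y then y else if y = n then q else y + 1
  left_inv x := by dsimp only; split_ifs <;> omega
  right_inv x := by dsimp only; split_ifs <;> omega

theorem ins_apply (q n : ℤ) (h : q ≤ n) (x : ℤ) :
    ins q n h x = if x < q ∨ n < x then x else if x = q then n else x - 1 := rfl
theorem ins_symm_apply (q n : ℤ) (h : q ≤ n) (y : ℤ) :
    (ins q n h).symm y = if y < q ∨ n < y then y else if y = n then q else y + 1 := rfl

theorem Es_image (n q : ℕ) (hq : q ≤ n) :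
    {π | Supp 0 (n+1) π ∧ Av π ∧ π (q:ℤ) = n} =
      (fun σ : Perm ℤ => (ins q n (by exact_mod_cast hq)).trans σ) '' Fs n q := by
  have hq' : (q:ℤ) ≤ n := by exact_mod_cast hq
  ext π
  constructor
  · rintro ⟨hs, ha, hm⟩
    refine ⟨(ins q n hq').symm.trans π, ⟨?_, ?_, ?_⟩, ?_⟩
    · intro x hx
      simp only [Equiv.trans_apply, ins_symm_apply]
      split_ifs with h1 h2
      · exact hs x (by omega)
      · rw [h2, hm]
      · omega
    · intro x y z hxy hyz h1 h2
      simp only [Equiv.trans_apply] at h1 h2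
      have hmax : ∀ x : ℤ, x ≤ n → π x ≤ n := by
        intro x hx
        rcases lt_or_ge x 0 with h | h
        · rw [hs x (by omega)]; exact hx
        · have := hs.mem x h (by omega); omega
      have hz : ∀ x : ℤ, (n:ℤ) < x → π x = x := fun x hx => hs x (by omega)
      by_cases hzn : z < n
      · refine ha _ _ _ ?_ ?_ h1 h2 <;> (simp only [ins_symm_apply]; split_ifs <;> omega)
      · rcases eq_or_lt_of_le (not_lt.1 hzn) with hzn | hzn
        · subst hzn
          rw [ins_symm_apply q n hq' n] at h2
          simp only [lt_irrefl, or_false, not_lt.2 hq', if_false, if_true, hm] at h2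
          have := hmax ((ins q n hq').symm y) (by rw [ins_symm_apply]; split_ifs <;> omega)
          omega
        · rw [ins_symm_apply q n hq' z, if_pos (Or.inr hzn), hz z hzn] at h2
          by_cases hyn : (n:ℤ) < y
          · rw [ins_symm_apply q n hq' y, if_pos (Or.inr hyn), hz y hyn] at h2
            omega
          · have := hmax ((ins q n hq').symm y) (by rw [ins_symm_apply]; split_ifs <;> omega)
            omega
    · intro x y hx hxy hy
      simp only [Equiv.trans_apply, ins_symm_apply]
      rw [if_neg (by omega), if_neg (by omega), if_neg (by omega), if_neg (by omega)]
      by_contra hc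
      have hne : π (y+1) ≠ π (x+1) := fun h => by have := π.injective h; omega
      have hne2 : π (x+1) ≠ π q := fun h => by have := π.injective h; omega
      have := hs.mem (x+1) (by omega) (by omega)
      exact ha q (x+1) (y+1) (by omega) (by omega) (by omega) (by omega)
    · ext x; simp
  · rintro ⟨σ, ⟨hs, ha, hinc⟩, rfl⟩
    have hv : ∀ x, ((ins q n hq').trans σ) x =
        if x < q then σ x else if n < x then x else if x = q then (n:ℤ) else σ (x-1) := by
      intro x
      have hn : σ n = n := hs n (by omega)
      simp only [Equiv.trans_apply, ins_apply]
      by_cases h1 : x < q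
      · simp [h1]
      · by_cases h2 : (n:ℤ) < x
        · simp [h2, h1]; exact hs x (by omega)
        · by_cases h3 : x = q
          · subst h3
            rw [if_neg (by omega), if_pos rfl, if_neg h1, if_neg h2, if_pos rfl, hn]
          · simp [h1, h2, h3]
    have hlt : ∀ x : ℤ, x < n → σ x < n := by
      intro x hx
      rcases lt_or_ge x 0 with h | h
      · rw [hs x (by omega)]; omega
      · exact (hs.mem x h hx).2
    refine ⟨?_, ?_, ?_⟩
    · intro x hx
      rw [hv]
      have := hs x
      split_ifs <;> omega
    · intro x y z hxy hyz h1 h2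
      beta_reduce at h1 h2
      have v1 : ∀ x : ℤ, x < q → ((ins q n hq').trans σ) x = σ x := by
        intro x h; rw [hv, if_pos h]
      have v2 : ((ins q n hq').trans σ) q = n := by
        rw [hv, if_neg (by omega), if_neg (by omega), if_pos rfl]
      have v3 : ∀ x : ℤ, q < x → x ≤ n → ((ins q n hq').trans σ) x = σ (x-1) := by
        intro x h h'; rw [hv, if_neg (by omega), if_neg (by omega), if_neg (by omega)]
      have v4 : ∀ x : ℤ, n < x → ((ins q n hq').trans σ) x = x := by
        intro x h; rw [hv, if_neg (by omega), if_pos h]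
      clear hv
      generalize ((ins q n hq').trans σ) = f at *
      have hz : z ≤ n := by
        by_contra hc
        have h3 := v4 z (by omega)
        rcases lt_trichotomy y q with h | h | h
        · have := hlt y (by omega); have := v1 y h; omega
        · rw [h] at h2; omega
        · by_cases h' : y ≤ n
          · have := hlt (y-1) (by omega); have := v3 y h h'; omega
          · have := v4 y (by omega); omega
      rcases lt_trichotomy y q with h | h | h
      · rw [v1 x (by omega), v1 y h] at h1
        rw [v1 y h] at h2
        rcases lt_trichotomy z q with h' | h' | h'
        · rw [v1 z h'] at h2; exact ha x y z hxy hyz h1 h2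
        · rw [h', v2] at h2; have := hlt y (by omega); omega
        · rw [v3 z h' hz] at h2; exact ha x y (z-1) hxy (by omega) h1 h2
      · rw [h, v2, v1 x (by omega)] at h1
        have := hlt x (by omega); omega
      · rw [v3 y h (by omega), v3 z (by omega) hz] at h2
        have := hinc (y-1) (z-1) (by omega) (by omega) (by omega)
        omega
    · rw [hv, if_neg (by omega), if_neg (by omega), if_pos rfl]

theorem Es_card (n q : ℕ) (hq : q ≤ n) :
    {π | Supp 0 (n+1) π ∧ Av π ∧ π (q:ℤ) = n}.ncard = (Fs n q).ncard := by
  rw [Es_image n q hq]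
  apply Set.ncard_image_of_injective
  intro a b h
  ext x
  have := congrArg (fun f : Perm ℤ => f ((ins q n (by exact_mod_cast hq)).symm x)) h
  simpa using this

theorem Ls_zero (n : ℕ) : Ls n 0 = ∅ := by
  ext π
  simp only [Ls, Set.mem_ofPred_eq, Set.mem_empty_iff_false, iff_false]
  rintro ⟨hs, ha, q, hq, hm⟩
  have := hs q (by push_cast at hq; omega)
  push_cast at hq; omega

theorem Ls_succ (n p : ℕ) (hp : p ≤ n) : (Ls n (p+1)).ncard = (Ls n p).ncard + (Fs n p).ncard := by
  rw [← Es_card n p hp, ← Set.ncard_union_eq ?_ (Ls_finite n p)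
    ((supp_finite 0 (n+1)).subset fun _ h => h.1)]
  · congr 1
    ext π
    simp only [Ls, Set.mem_ofPred_eq, Set.mem_union]
    constructor
    · rintro ⟨hs, ha, q, hq, hm⟩
      push_cast at hq
      rcases eq_or_lt_of_le (Int.lt_add_one_iff.1 hq) with h | h
      · right; subst h; exact ⟨hs, ha, hm⟩
      · left; exact ⟨hs, ha, q, h, hm⟩
    · rintro (⟨hs, ha, q, hq, hm⟩ | ⟨hs, ha, hm⟩)
      · exact ⟨hs, ha, q, by push_cast; omega, hm⟩
      · exact ⟨hs, ha, p, by push_cast; omega, hm⟩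
  · rw [Set.disjoint_left]
    rintro π ⟨hs, ha, q, hq, hm⟩ ⟨_, _, hm'⟩
    have := π.injective (hm.trans hm'.symm)
    omega

theorem Fs_succ (n p : ℕ) (hp : p ≤ n) : (Fs (n+1) p).ncard = (Ls n p).ncard + (Fs n p).ncard := by
  rw [← Set.ncard_union_eq ?_ (Ls_finite n p) (Fs_finite n p)]
  · congr 1
    ext π
    simp only [Ls, Fs, Set.mem_ofPred_eq, Set.mem_union]
    push_cast
    constructor
    · rintro ⟨hs, ha, hinc⟩
      by_cases hn : π n = n
      · right
        refine ⟨?_, ha, fun x y hx hxy hy => hinc x y hx hxy (by omega)⟩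
        intro x hx
        by_cases h : x = n
        · rw [h, hn]
        · exact hs x (by omega)
      · left
        refine ⟨hs, ha, π.symm n, ?_, by simp⟩
        by_contra hc
        have hq : π (π.symm n) = n := by simp
        generalize π.symm n = q at *
        have h3 := hs.mem n (by omega) (by omega)
        by_cases hqn : q < n
        · have := hinc q n (by omega) hqn (by omega)
          omega
        · by_cases h4 : q = n
          · rw [h4] at hq; exact hn hq
          · have := hs q (by omega)
            omega
    · rintro (⟨hs, ha, q, hq, hm⟩ | ⟨hs, ha, hinc⟩)
      · refine ⟨hs, ha, fun x y hx hxy hy => ?_⟩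
        by_contra hc
        have hne : π y ≠ π x := fun h => by have := π.injective h; omega
        have hne2 : π x ≠ π q := fun h => by have := π.injective h; omega
        have := hs.mem x (by omega) (by omega)
        exact ha q x y (by omega) (by omega) (by omega) (by omega)
      · refine ⟨fun x hx => hs x (by omega), ha, fun x y hx hxy hy => ?_⟩
        by_cases h : y < n
        · exact hinc x y hx hxy h
        · have h1 := hs y (by omega)
          have := hs.mem x (by omega) (by omega)
          omega
  · rw [Set.disjoint_left]
    rintro π ⟨hs, ha, q, hq, hm⟩ ⟨hs', _, _⟩
    have := hs' n (by omega)
    have := π.injective (hm.trans this.symm)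
    omega

theorem Fs_diag (n : ℕ) : Fs (n+1) (n+1) = Fs (n+1) n := by
  ext π
  simp only [Fs, Set.mem_ofPred_eq]
  push_cast
  constructor
  · rintro ⟨hs, ha, hinc⟩
    exact ⟨hs, ha, fun x y _ _ _ => by omega⟩
  · rintro ⟨hs, ha, hinc⟩
    exact ⟨hs, ha, fun x y _ _ _ => by omega⟩

theorem Fs_zero : Fs 0 0 = {1} := by
  ext π
  simp only [Fs, Set.mem_ofPred_eq, Set.mem_singleton_iff]
  push_cast
  constructor
  · rintro ⟨hs, ha, hinc⟩
    ext x
    exact hs x (by omega)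
  · rintro rfl
    refine ⟨fun x _ => rfl, fun x y z _ _ h1 _ => ?_, fun x y _ _ _ => by omega⟩
    simp at h1
    omega

def L2 (j : ℤ) : Set (Perm ℤ) :=
  {σ | Supp 0 (j+1) σ ∧ Av σ ∧ ∃ i : ℤ, i + 1 < j ∧ σ i = j}
def R2 (n j : ℤ) : Set (Perm ℤ) :=
  {σ | Supp j n σ ∧ Av σ ∧ ∃ k : ℤ, j + 1 < k ∧ σ k = j}

/-- `(i,j,k)` is the only occurrence of 321. -/
def Only (π : Perm ℤ) (i j k : ℤ) : Prop :=
  i + 1 < j ∧ j + 1 < k ∧ π k < π j ∧ π j < π i ∧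
  ∀ x y z, x < y → y < z → π y < π x → π z < π y → x = i ∧ y = j ∧ z = k

def Xs (n : ℤ) : Set (Perm ℤ) := {π | Supp 0 n π ∧ ∃ i j k, Only π i j k}

def glue (j : ℤ) (σ τ : Perm ℤ) : Perm ℤ := τ * σ * swap j (τ.symm j)

/-- The relation between the glued permutation and its pieces. -/
structure Glued (i j k : ℤ) (σ τ π : Perm ℤ) : Prop where
  hi : i + 1 < j
  hk : j + 1 < k
  si : σ i = j
  tk : τ k = j
  pi : π i = τ j
  pj : π j = j
  pk : π k = σ j
  sj : σ j < j
  tj : j < τ j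
  sl : ∀ x, x < j → x ≠ i → σ x < j
  tr : ∀ x, j < x → x ≠ k → j < τ x
  pl : ∀ x, x < j → x ≠ i → π x = σ x
  pr : ∀ x, j < x → x ≠ k → π x = τ x
  sr : ∀ x, j < x → σ x = x
  tl : ∀ x, x < j → τ x = x

theorem glued_glue {n i j k : ℤ} {σ τ : Perm ℤ} (hσ : Supp 0 (j+1) σ) (hτ : Supp j n τ)
    (hi : i + 1 < j) (si : σ i = j) (hk : j + 1 < k) (tk : τ k = j) :
    Glued i j k σ τ (glue j σ τ) := by
  have hkk : τ.symm j = k := by rw [← tk]; simp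
  have gv : ∀ x, glue j σ τ x = τ (σ (swap j k x)) := by
    intro x; simp [glue, hkk]
  have sr : ∀ x, j < x → σ x = x := fun x hx => hσ x (by omega)
  have tl : ∀ x, x < j → τ x = x := fun x hx => hτ x (by omega)
  have sle : ∀ x, x ≤ j → σ x ≤ j := by
    intro x hx
    by_contra hc
    have := σ.injective (sr (σ x) (by omega))
    omega
  have tge : ∀ x, j ≤ x → j ≤ τ x := by
    intro x hx
    by_contra hc
    have := τ.injective (tl (τ x) (by omega))
    omega
  have sl : ∀ x, x ≤ j → x ≠ i → σ x < j := by
    intro x hx hxi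
    have h1 := sle x hx
    have h2 : σ x ≠ j := fun h => hxi (σ.injective (h.trans si.symm))
    omega
  have tr : ∀ x, j ≤ x → x ≠ k → j < τ x := by
    intro x hx hxi
    have h1 := tge x hx
    have h2 : τ x ≠ j := fun h => hxi (τ.injective (h.trans tk.symm))
    omega
  refine ⟨hi, hk, si, tk, ?_, ?_, ?_, sl j le_rfl (by omega), tr j le_rfl (by omega),
    fun x hx hxi => sl x hx.le hxi, fun x hx hxi => tr x hx.le hxi, ?_, ?_, sr, tl⟩
  · rw [gv, swap_apply_of_ne_of_ne (by omega) (by omega), si]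
  · rw [gv, swap_apply_left, sr k (by omega), tk]
  · rw [gv, swap_apply_right, tl _ (sl j le_rfl (by omega))]
  · intro x hx hxi
    rw [gv, swap_apply_of_ne_of_ne (by omega) (by omega), tl _ (sl x hx.le hxi)]
  · intro x hx hxi
    rw [gv, swap_apply_of_ne_of_ne (by omega) (by omega), sr x hx]

theorem Glued.only {i j k : ℤ} {σ τ π : Perm ℤ} (g : Glued i j k σ τ π) (hσ : Av σ) (hτ : Av τ) :
    Only π i j k := by
  obtain ⟨hi, hk, si, tk, pi, pj, pk, sj, tj, sl, tr, pl, pr, sr, tl⟩ := g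
  refine ⟨hi, hk, by omega, by omega, ?_⟩
  intro x y z hxy hyz h1 h2
  rcases lt_trichotomy y j with hy | hy | hy
  · exfalso
    have hx1 := pl x (by omega)
    have hx2 := sl x (by omega)
    have hyi : y ≠ i := by
      rintro rfl
      have := hx1 (by omega)
      have := hx2 (by omega)
      omega
    have hy1 := pl y hy hyi
    have hy2 := sl y hy hyi
    have hsx : σ y < σ x := by
      by_cases h : x = i
      · rw [h, si]; omega
      · have := hx1 h; omega
    rcases lt_trichotomy z j with hz | hz | hz
    · have hzi : z ≠ i := by rintro rfl; omega
      have := pl z hz hzi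
      exact hσ x y z hxy hyz hsx (by omega)
    · rw [hz] at h2; omega
    · by_cases hzk : z = k
      · rw [hzk] at h2
        exact hσ x y j hxy hy hsx (by omega)
      · have := pr z hz hzk
        have := tr z hz hzk
        omega
  · subst hy
    refine ⟨?_, rfl, ?_⟩
    · by_contra h
      have := pl x hxy h
      have := sl x hxy h
      omega
    · by_contra h
      have := pr z hyz h
      have := tr z hyz h
      omega
  · exfalso
    have hz1 := pr z (by omega)
    have hz2 := tr z (by omega)
    have hyk : y ≠ k := by
      rintro rfl
      have := hz1 (by omega)
      have := hz2 (by omega)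
      omega
    have hy1 := pr y hy hyk
    have hy2 := tr y hy hyk
    have hsz : τ z < τ y := by
      by_cases h : z = k
      · rw [h, tk]; omega
      · have := hz1 h; omega
    rcases lt_trichotomy x j with hx | hx | hx
    · by_cases hxi : x = i
      · rw [hxi] at h1
        exact hτ j y z hy hyz (by omega) hsz
      · have := pl x hx hxi
        have := sl x hx hxi
        omega
    · rw [hx] at h1; omega
    · have hxk : x ≠ k := by rintro rfl; omega
      have := pr x hx hxk
      exact hτ x y z hxy hyz (by omega) hsz

theorem Glued.supp {n i j k : ℤ} {σ τ π : Perm ℤ} (g : Glued i j k σ τ π)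
    (hσ : Supp 0 (j+1) σ) (hτ : Supp j n τ) (h0 : 0 ≤ j) (hn : j < n) : Supp 0 n π := by
  have hi := (hσ.inv i j (by have := g.hi; omega) (by rw [g.si]; exact g.sj)).1
  have hk := (hτ.inv j k (by have := g.hk; omega) (by rw [g.tk]; exact g.tj)).2
  rintro x (hx | hx)
  · rw [g.pl x (by omega) (by omega)]; exact hσ x (by omega)
  · rw [g.pr x (by omega) (by omega)]; exact hτ x (by omega)

theorem fix_of_order {n j : ℤ} {ρ : Perm ℤ} (hs : Supp 0 n ρ) (h0 : 0 ≤ j) (hj : j < n)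
    (h : ∀ x, ρ x < ρ j ↔ x < j) : ρ j = j := by
  have e : (Finset.Ico 0 j).image ρ = Finset.Ico 0 (ρ j) := by
    ext y
    simp only [Finset.mem_image, Finset.mem_Ico]
    constructor
    · rintro ⟨x, ⟨h1, h2⟩, rfl⟩
      exact ⟨(hs.mem x h1 (by omega)).1, (h x).2 h2⟩
    · rintro ⟨h1, h2⟩
      refine ⟨ρ.symm y, ⟨?_, ?_⟩, by simp⟩
      · by_contra hc
        have := hs (ρ.symm y) (by omega)
        simp at this
        omega
      · rw [← h]; simpa using h2
  have hc := congrArg Finset.card e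
  rw [Finset.card_image_of_injective _ ρ.injective] at hc
  simp only [Int.card_Ico] at hc
  have := (hs.mem j h0 hj).1
  omega

theorem only_fix {n i j k : ℤ} {π : Perm ℤ} (hs : Supp 0 n π) (h : Only π i j k) :
    π j = j ∧ 0 ≤ i ∧ k < n ∧ (∀ x, x < j → x ≠ i → π x < j) ∧ (∀ x, j < x → x ≠ k → j < π x) := by
  obtain ⟨hi, hk, h1, h2, hu⟩ := h
  have hi0 := (hs.inv i j (by omega) h2).1
  have hkn := (hs.inv j k (by omega) h1).2
  have hl : ∀ x, x < j → x ≠ i → π x < π j := by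
    intro x hx hxi
    by_contra hc
    have hne : π x ≠ π j := fun h => by have := π.injective h; omega
    exact hxi (hu x j k hx (by omega) (by omega) h1).1
  have hr : ∀ x, j < x → x ≠ k → π j < π x := by
    intro x hx hxi
    by_contra hc
    have hne : π x ≠ π j := fun h => by have := π.injective h; omega
    exact hxi (hu i j x (by omega) hx h2 (by omega)).2.2
  have hf : π j = j := by
    have hj : (π * swap i k) j = π j := by
      simp [swap_apply_of_ne_of_ne (show j ≠ i by omega) (show j ≠ k by omega)]
    rw [← hj]
    apply fix_of_order (n := n) _ (by omega) (by omega)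
    · intro x
      rw [hj]
      simp only [Perm.mul_apply]
      by_cases hxi : x = i
      · rw [hxi, swap_apply_left]; exact ⟨fun _ => by omega, fun _ => h1⟩
      by_cases hxk : x = k
      · rw [hxk, swap_apply_right]; constructor <;> intro <;> omega
      rw [swap_apply_of_ne_of_ne hxi hxk]
      refine ⟨fun h => ?_, fun h => hl x h hxi⟩
      by_contra hc
      rcases eq_or_lt_of_le (not_lt.1 hc) with h' | h'
      · rw [h'] at h; omega
      · have := hr x h' hxk; omega
    · intro x hx
      simp only [Perm.mul_apply]
      rw [swap_apply_of_ne_of_ne (by omega) (by omega)]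
      exact hs x hx
  rw [hf] at hl hr
  exact ⟨hf, hi0, hkn, hl, hr⟩

theorem restrict_perm (η : Perm ℤ) (p : ℤ → Prop) (h : ∀ x, p (η x) ↔ p x) :
    ∃ σ : Perm ℤ, (∀ x, p x → σ x = η x) ∧ ∀ x, ¬ p x → σ x = x := by
  classical
  refine ⟨Perm.ofSubtype (η.subtypePerm h), fun x hx => ?_, fun x hx => ?_⟩
  · rw [Perm.ofSubtype_apply_of_mem _ hx]; rfl
  · exact Perm.ofSubtype_apply_of_not_mem _ hx

theorem only_split {n i j k : ℤ} {π : Perm ℤ} (hs : Supp 0 n π) (h : Only π i j k) :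
    ∃ σ τ : Perm ℤ, σ ∈ L2 j ∧ τ ∈ R2 n j ∧ glue j σ τ = π := by
  obtain ⟨hf, hi0, hkn, hl, hr⟩ := only_fix hs h
  obtain ⟨hi, hk, h1, h2, hu⟩ := h
  rw [hf] at h1 h2
  have inj : ∀ {x y}, π x = π y → x = y := fun h => π.injective h
  -- left piece
  have e1 : ∀ x, (swap j (π i) * π * swap j k) x ≤ j ↔ x ≤ j := by
    intro x
    simp only [Perm.mul_apply]
    by_cases hxj : x = j
    · rw [hxj, swap_apply_left, swap_apply_of_ne_of_ne (by omega) (by omega)]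
      constructor <;> intro <;> omega
    by_cases hxk : x = k
    · rw [hxk, swap_apply_right, hf, swap_apply_left]
      constructor <;> intro <;> omega
    rw [swap_apply_of_ne_of_ne hxj hxk]
    by_cases hxi : x = i
    · rw [hxi, swap_apply_right]
      constructor <;> intro <;> omega
    have n1 : π x ≠ π i := fun h => hxi (inj h)
    have n2 : π x ≠ j := fun h => hxj (inj (h.trans hf.symm))
    rw [swap_apply_of_ne_of_ne n2 n1]
    constructor
    · intro h
      by_contra hc
      have := hr x (by omega) hxk
      omega
    · intro h
      have := hl x (by omega) hxi
      omega
  obtain ⟨σ, s1, s2⟩ := restrict_perm _ (fun x => x ≤ j) e1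
  have sj : σ j = π k := by
    rw [s1 j le_rfl]
    simp only [Perm.mul_apply]
    rw [swap_apply_left, swap_apply_of_ne_of_ne (by omega) (by omega)]
  have si : σ i = j := by
    rw [s1 i (by omega)]
    simp only [Perm.mul_apply]
    rw [swap_apply_of_ne_of_ne (show i ≠ j by omega) (show i ≠ k by omega), swap_apply_right]
  have sl : ∀ x, x < j → x ≠ i → σ x = π x := by
    intro x hx hxi
    rw [s1 x (by omega)]
    simp only [Perm.mul_apply]
    have n1 : π x ≠ π i := fun h => hxi (inj h)
    have n2 : π x ≠ j := fun h => by have := (inj (h.trans hf.symm)); omega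
    rw [swap_apply_of_ne_of_ne (show x ≠ j by omega) (show x ≠ k by omega), swap_apply_of_ne_of_ne n2 n1]
  have sr : ∀ x, j < x → σ x = x := fun x hx => s2 x (by omega)
  -- right piece
  have e2 : ∀ x, j ≤ (swap j (π k) * π * swap j i) x ↔ j ≤ x := by
    intro x
    simp only [Perm.mul_apply]
    by_cases hxj : x = j
    · rw [hxj, swap_apply_left, swap_apply_of_ne_of_ne (by omega) (by omega)]
      constructor <;> intro <;> omega
    by_cases hxk : x = i
    · rw [hxk, swap_apply_right, hf, swap_apply_left]
      constructor <;> intro <;> omega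
    rw [swap_apply_of_ne_of_ne hxj hxk]
    by_cases hxi : x = k
    · rw [hxi, swap_apply_right]
      constructor <;> intro <;> omega
    have n1 : π x ≠ π k := fun h => hxi (inj h)
    have n2 : π x ≠ j := fun h => hxj (inj (h.trans hf.symm))
    rw [swap_apply_of_ne_of_ne n2 n1]
    constructor
    · intro h
      by_contra hc
      have := hl x (by omega) hxk
      omega
    · intro h
      have := hr x (by omega) hxi
      omega
  obtain ⟨τ, t1, t2⟩ := restrict_perm _ (fun x => j ≤ x) e2
  have tj : τ j = π i := by
    rw [t1 j le_rfl]
    simp only [Perm.mul_apply]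
    rw [swap_apply_left, swap_apply_of_ne_of_ne (by omega) (by omega)]
  have tk : τ k = j := by
    rw [t1 k (by omega)]
    simp only [Perm.mul_apply]
    rw [swap_apply_of_ne_of_ne (show k ≠ j by omega) (show k ≠ i by omega), swap_apply_right]
  have tr : ∀ x, j < x → x ≠ k → τ x = π x := by
    intro x hx hxi
    rw [t1 x (by omega)]
    simp only [Perm.mul_apply]
    have n1 : π x ≠ π k := fun h => hxi (inj h)
    have n2 : π x ≠ j := fun h => by have := (inj (h.trans hf.symm)); omega
    rw [swap_apply_of_ne_of_ne (show x ≠ j by omega) (show x ≠ i by omega), swap_apply_of_ne_of_ne n2 n1]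
  have tl : ∀ x, x < j → τ x = x := fun x hx => t2 x (by omega)
  have hσ : Supp 0 (j+1) σ := by
    rintro x (hx | hx)
    · rw [sl x (by omega) (by omega)]; exact hs x (by omega)
    · exact sr x (by omega)
  have hτ : Supp j n τ := by
    rintro x (hx | hx)
    · exact tl x (by omega)
    · rw [tr x (by omega) (by omega)]; exact hs x (by omega)
  refine ⟨σ, τ, ⟨hσ, ?_, i, hi, si⟩, ⟨hτ, ?_, k, hk, tk⟩, ?_⟩
  · intro x y z hxy hyz g1 g2
    have hz : z ≤ j := by have := (hσ.inv y z hyz g2).2; omega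
    have hyi : y ≠ i := by
      rintro rfl
      have := sl x (by omega) (by omega)
      have := hl x (by omega) (by omega)
      omega
    have hy := sl y (by omega) hyi
    have hy' := hl y (by omega) hyi
    have hx : π y < π x := by
      by_cases h : x = i
      · rw [h]; omega
      · have := sl x (by omega) h; omega
    rcases eq_or_lt_of_le hz with h | h
    · rw [h, sj] at g2
      have := hu x y k hxy (by omega) hx (by omega)
      omega
    · have hzi : z ≠ i := by rintro rfl; omega
      have := sl z h hzi
      have := hu x y z hxy hyz hx (by omega)
      omega
  · intro x y z hxy hyz g1 g2
    have hz : j ≤ x := by have := (hτ.inv x y hxy g1).1; omega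
    have hyi : y ≠ k := by
      rintro rfl
      have := tr z (by omega) (by omega)
      have := hr z (by omega) (by omega)
      omega
    have hy := tr y (by omega) hyi
    have hy' := hr y (by omega) hyi
    have hx : π z < π y := by
      by_cases h : z = k
      · rw [h]; omega
      · have := tr z (by omega) h; omega
    rcases eq_or_lt_of_le hz with h | h
    · rw [← h, tj] at g1
      have := hu i y z (by omega) hyz (by omega) hx
      omega
    · have hzi : x ≠ k := by rintro rfl; omega
      have := tr x h hzi
      have := hu x y z hxy hyz (by omega) hx
      omega
  · have g := glued_glue hσ hτ hi si hk tk
    ext x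
    rcases lt_trichotomy x j with hx | hx | hx
    · by_cases h : x = i
      · rw [h, g.pi, tj]
      · rw [g.pl x hx h, sl x hx h]
    · rw [hx, g.pj, hf]
    · by_cases h : x = k
      · rw [h, g.pk, sj]
      · rw [g.pr x hx h, tr x hx h]

theorem L2_finite (j) : (L2 j).Finite := (supp_finite 0 (j+1)).subset fun _ h => h.1
theorem R2_finite (n j) : (R2 n j).Finite := (supp_finite j n).subset fun _ h => h.1
theorem Xs_finite (n) : (Xs n).Finite := (supp_finite 0 n).subset fun _ h => h.1

theorem Xs_card (n : ℕ) :
    (Xs n).ncard = ∑ j ∈ Finset.range n, (L2 j).ncard * (R2 n j).ncard := by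
  classical
  have hL := fun j : ℕ => Set.ncard_eq_toFinset_card _ (L2_finite j)
  have hR := fun j : ℕ => Set.ncard_eq_toFinset_card _ (R2_finite n j)
  rw [Set.ncard_eq_toFinset_card _ (Xs_finite n)]
  simp only [hL, hR, ← Finset.card_product]
  rw [← Finset.card_sigma]
  symm
  apply Finset.card_nbij (fun t => glue t.1 t.2.1 t.2.2)
  · rintro ⟨j, σ, τ⟩ h
    simp only [Finset.mem_coe, Finset.mem_sigma, Finset.mem_range, Finset.mem_product,
      Set.Finite.mem_toFinset] at h ⊢
    obtain ⟨hj, ⟨a1, a2, i, hi, si⟩, ⟨b1, b2, k, hk, tk⟩⟩ := h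
    have g := glued_glue a1 b1 hi si hk tk
    exact ⟨g.supp a1 b1 (by omega) (by omega), i, j, k, g.only a2 b2⟩
  · rintro ⟨j, σ, τ⟩ h ⟨j', σ', τ'⟩ h' e
    simp only [Finset.mem_coe, Finset.mem_sigma, Finset.mem_range, Finset.mem_product,
      Set.Finite.mem_toFinset] at h h'
    obtain ⟨hj, ⟨a1, a2, i, hi, si⟩, ⟨b1, b2, k, hk, tk⟩⟩ := h
    obtain ⟨hj', ⟨a1', a2', i', hi', si'⟩, ⟨b1', b2', k', hk', tk'⟩⟩ := h'
    have g := glued_glue a1 b1 hi si hk tk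
    have g' := glued_glue a1' b1' hi' si' hk' tk'
    dsimp only at e
    rw [← e] at g'
    have o := g.only a2 b2
    have o' := g'.only a2' b2'
    obtain ⟨rfl, hjj, rfl⟩ := o.2.2.2.2 i' j' k' (by omega) (by omega) o'.2.2.2.1 o'.2.2.1
    obtain rfl : j' = j := by exact_mod_cast hjj
    have e1 : σ = σ' := by
      ext x
      rcases lt_trichotomy x j' with hx | hx | hx
      · by_cases h : x = i'
        · rw [h, si, si']
        · rw [← g.pl x hx h, ← g'.pl x hx h]
      · rw [hx, ← g.pk, ← g'.pk]
      · rw [g.sr x hx, g'.sr x hx]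
    have e2 : τ = τ' := by
      ext x
      rcases lt_trichotomy x j' with hx | hx | hx
      · rw [g.tl x hx, g'.tl x hx]
      · rw [hx, ← g.pi, ← g'.pi]
      · by_cases h : x = k'
        · rw [h, tk, tk']
        · rw [← g.pr x hx h, ← g'.pr x hx h]
    rw [e1, e2]
  · intro π h
    simp only [Finset.mem_coe, Set.Finite.mem_toFinset] at h
    obtain ⟨hs, i, j, k, ho⟩ := h
    obtain ⟨hf, hi0, hkn, hl, hr⟩ := only_fix hs ho
    have := ho.1
    have := ho.2.1
    obtain ⟨σ, τ, h1, h2, h3⟩ := only_split hs ho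
    lift j to ℕ using by omega
    refine ⟨⟨j, σ, τ⟩, ?_, h3⟩
    simp only [Finset.mem_coe, Finset.mem_sigma, Finset.mem_range, Finset.mem_product,
      Set.Finite.mem_toFinset]
    exact ⟨by omega, h1, h2⟩

/-- Reverse complement. -/
theorem R2_card (n j : ℤ) : (R2 n j).ncard = (L2 (n - 1 - j)).ncard := by
  let r : Perm ℤ := Equiv.subLeft (n-1)
  have hr : ∀ x, r x = n - 1 - x := fun x => rfl
  have hr' : ∀ x, r.symm x = n - 1 - x := fun x => by
    rw [Equiv.symm_apply_eq, hr]; omega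
  have e : R2 n j = (fun σ : Perm ℤ => (r.trans σ).trans r) '' L2 (n - 1 - j) := by
    ext π
    constructor
    · rintro ⟨hs, ha, k, hk, hkj⟩
      refine ⟨(r.trans π).trans r, ⟨?_, ?_, n - 1 - k, by omega, ?_⟩, ?_⟩
      · intro x hx
        simp only [Equiv.trans_apply, hr]
        rw [hs _ (by omega)]; omega
      · intro x y z hxy hyz h1 h2
        simp only [Equiv.trans_apply, hr] at h1 h2
        exact ha (n-1-z) (n-1-y) (n-1-x) (by omega) (by omega) (by omega) (by omega)
      · simp only [Equiv.trans_apply, hr]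
        rw [show n - 1 - (n - 1 - k) = k by omega, hkj]
      · ext x
        simp only [Equiv.trans_apply, hr]
        rw [show n - 1 - (n - 1 - x) = x by omega]; omega
    · rintro ⟨π, ⟨hs, ha, k, hk, hkj⟩, rfl⟩
      refine ⟨?_, ?_, n - 1 - k, by omega, ?_⟩
      · intro x hx
        simp only [Equiv.trans_apply, hr]
        rw [hs _ (by omega)]; omega
      · intro x y z hxy hyz h1 h2
        simp only [Equiv.trans_apply, hr] at h1 h2
        exact ha (n-1-z) (n-1-y) (n-1-x) (by omega) (by omega) (by omega) (by omega)
      · simp only [Equiv.trans_apply, hr]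
        rw [show n - 1 - (n - 1 - k) = k by omega, hkj]; omega
  rw [e]
  apply Set.ncard_image_of_injective
  intro a b h
  ext x
  have := congrArg (fun f : Perm ℤ => r (f (r x))) h
  simp only [Equiv.trans_apply, hr] at this
  rw [show n - 1 - (n - 1 - x) = x by omega] at this
  omega

theorem L2_small (j : ℕ) (hj : j ≤ 1) : (L2 j).ncard = 0 := by
  have : L2 j = ∅ := by
    ext π
    simp only [L2, Set.mem_ofPred_eq, Set.mem_empty_iff_false, iff_false]
    rintro ⟨hs, ha, i, hi, hm⟩
    have := hs i (by omega)
    omega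
  rw [this]; simp

theorem L2_eq (k : ℕ) : (L2 ((k + 2 : ℕ) : ℤ)).ncard = (Fs (k + 3) k).ncard := by
  have : L2 ((k + 2 : ℕ) : ℤ) = Ls (k + 2) (k + 1) := by
    ext π
    simp only [L2, Ls, Set.mem_ofPred_eq]
    refine and_congr Iff.rfl (and_congr Iff.rfl (exists_congr fun i => and_congr ?_ Iff.rfl))
    push_cast; constructor <;> intro <;> omega
  rw [this, Ls_succ _ _ (by omega), ← Fs_succ _ _ (by omega)]

theorem L2_card (k : ℕ) : ((L2 ((k + 2 : ℕ) : ℤ)).ncard : ℚ) * (k + 4) = 4 * Nat.choose (2 * k + 3) k := by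
  rw [L2_eq]
  have := ballot_closed (fun n p => (Fs n p).ncard) (by simp [Fs_zero])
    (fun n => by rw [Fs_succ _ _ (by omega), Ls_zero]; simp)
    (fun n p hp => by
      rw [Fs_succ n (p+1) hp, Fs_succ n p (by omega), Ls_succ n p (by omega)])
    (fun n => by rw [Fs_diag]) (k+3) k (by omega)
  rw [show k + 3 + k = 2 * k + 3 by ring] at this
  push_cast at this
  linear_combination this

theorem Xs_final (m : ℕ) :
    ((Xs ((m + 5 : ℕ) : ℤ)).ncard : ℚ) = (8 / (m + 8 : ℚ)) * (Nat.choose (2 * m + 7) (m + 7)) := by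
  rw [← conv_sum (fun k => ((L2 ((k + 2 : ℕ) : ℤ)).ncard : ℚ)) L2_card, Xs_card]
  have e : ∀ j ∈ Finset.range (m + 5), (L2 j).ncard * (R2 ((m + 5 : ℕ) : ℤ) j).ncard
      = (L2 j).ncard * (L2 ((m + 4 - j : ℕ) : ℤ)).ncard := by
    intro j hj
    rw [Finset.mem_range] at hj
    rw [R2_card]
    congr 3
    omega
  rw [Finset.sum_congr rfl e, Finset.sum_range_succ, Finset.sum_range_succ, Finset.sum_range_succ',
    Finset.sum_range_succ']
  rw [L2_small (m + 4 - (m + 4)) (by omega), L2_small (m + 4 - (m + 3)) (by omega),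
    L2_small 0 (by omega), L2_small (0 + 1) (by omega)]
  push_cast
  simp only [mul_zero, zero_mul, add_zero]
  apply Finset.sum_congr rfl
  intro i hi
  rw [Finset.mem_range] at hi
  rw [show m + 2 - i = m - i + 2 by omega]
  push_cast
  rw [show (i:ℤ) + 1 + 1 = i + 2 by ring]

/-- `Fin n` as an interval of integers. -/
def finInt (n : ℕ) : Fin n ≃ {x : ℤ // 0 ≤ x ∧ x < n} where
  toFun a := ⟨a, by omega, by omega⟩
  invFun x := ⟨x.1.toNat, by have := x.2; omega⟩
  left_inv a := by ext; simp
  right_inv x := by ext; have := x.2; simp; omega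

def ext321 {n : ℕ} (π : Perm (Fin n)) : Perm ℤ :=
  Perm.extendDomain (π.trans Fin.revPerm) (finInt n)

theorem ext321_fin {n : ℕ} (π : Perm (Fin n)) (a : Fin n) :
    ext321 π (a : ℤ) = n - 1 - (π a : ℕ) := by
  have h := Perm.extendDomain_apply_image (π.trans Fin.revPerm) (finInt n) a
  have h1 : ((finInt n a : {x : ℤ // 0 ≤ x ∧ x < n}) : ℤ) = a := rfl
  rw [h1] at h
  rw [ext321, h]
  simp only [finInt, Equiv.coe_fn_mk, Equiv.trans_apply, Fin.revPerm_apply, Fin.val_rev]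
  have := (π a).2
  omega

theorem ext321_supp {n : ℕ} (π : Perm (Fin n)) : Supp 0 n (ext321 π) := by
  intro x hx
  exact Perm.extendDomain_apply_not_subtype _ _ (by omega)

theorem ext321_lt {n : ℕ} (π : Perm (Fin n)) (a b : Fin n) :
    ext321 π (a : ℤ) < ext321 π (b : ℤ) ↔ π b < π a := by
  rw [ext321_fin, ext321_fin, Fin.lt_def]
  omega

theorem ext321_injective {n : ℕ} : Function.Injective (ext321 (n := n)) := by
  intro a b h
  ext x
  have := congrArg (fun f : Perm ℤ => f (x : ℤ)) h
  simp only [ext321_fin] at this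
  omega

theorem ext321_surj {n : ℕ} (σ : Perm ℤ) (hs : Supp 0 n σ) : ∃ π : Perm (Fin n), ext321 π = σ := by
  have h : ∀ x, (0 ≤ σ x ∧ σ x < n) ↔ (0 ≤ x ∧ x < n) := by
    intro x
    constructor
    · intro hx
      by_contra hc
      have := hs x (by omega)
      omega
    · intro hx
      exact hs.mem x hx.1 hx.2
  refine ⟨(((finInt n).trans (σ.subtypePerm h)).trans (finInt n).symm).trans Fin.revPerm, ?_⟩
  ext x
  by_cases hx : 0 ≤ x ∧ x < n
  · obtain ⟨a, rfl⟩ : ∃ a : Fin n, (a : ℤ) = x := ⟨⟨x.toNat, by omega⟩, by simp; omega⟩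
    rw [ext321_fin]
    have hm := (h a).2 hx
    have : ((finInt n).symm (σ.subtypePerm h (finInt n a)) : ℕ) = (σ a).toNat := rfl
    simp only [Equiv.trans_apply, Fin.revPerm_apply, Fin.val_rev, this]
    omega
  · rw [ext321_supp _ x (by omega), hs x (by omega)]

theorem mem_iff {n : ℕ} (π : Perm (Fin n)) :
    (occ123 π = 1 ∧ occ1_23 π = 0 ∧ occ12_3 π = 0) ↔ ext321 π ∈ Xs n := by
  have hs := ext321_supp π
  have lt := ext321_lt π
  have liftf : ∀ x : ℤ, 0 ≤ x → x < n → ∃ a : Fin n, (a : ℤ) = x := fun x h1 h2 =>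
    ⟨⟨x.toNat, by omega⟩, by simp; omega⟩
  have lift3 : ∀ x y z : ℤ, x < y → y < z → ext321 π y < ext321 π x → ext321 π z < ext321 π y →
      ∃ a b c : Fin n, (a : ℤ) = x ∧ (b : ℤ) = y ∧ (c : ℤ) = z := by
    intro x y z hxy hyz h1 h2
    have h3 := hs.inv x y hxy h1
    have h4 := hs.inv y z hyz h2
    obtain ⟨a, ha⟩ := liftf x (by omega) (by omega)
    obtain ⟨b, hb⟩ := liftf y (by omega) (by omega)
    obtain ⟨c, hc⟩ := liftf z (by omega) (by omega)
    exact ⟨a, b, c, ha, hb, hc⟩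
  unfold occ123 occ1_23 occ12_3
  rw [Finset.card_eq_one, Finset.card_eq_zero, Finset.card_eq_zero,
    Finset.filter_eq_empty_iff, Finset.filter_eq_empty_iff]
  constructor
  · rintro ⟨⟨⟨i, j, k⟩, h⟩, h1, h2⟩
    have hm : ∀ a b c : Fin n, (a < b ∧ b < c ∧ π a < π b ∧ π b < π c) ↔ (a = i ∧ b = j ∧ c = k) := by
      intro a b c
      have := congrArg (fun s => (a, b, c) ∈ s) h
      simpa using this
    obtain ⟨e1, e2, e3, e4⟩ := (hm i j k).2 ⟨rfl, rfl, rfl⟩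
    have h1' := @h1 (i, j, k) (Finset.mem_univ _)
    have h2' := @h2 (i, j, k) (Finset.mem_univ _)
    simp only [e1, e2, e3, e4, true_and, and_true] at h1' h2'
    rw [Fin.lt_def] at e1 e2
    refine ⟨hs, i, j, k, by omega, by omega, (lt _ _).2 e4, (lt _ _).2 e3, ?_⟩
    intro x y z hxy hyz g1 g2
    obtain ⟨a, b, c, rfl, rfl, rfl⟩ := lift3 x y z hxy hyz g1 g2
    obtain ⟨rfl, rfl, rfl⟩ := (hm a b c).1
      ⟨by rw [Fin.lt_def]; omega, by rw [Fin.lt_def]; omega, (lt _ _).1 g1, (lt _ _).1 g2⟩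
    exact ⟨rfl, rfl, rfl⟩
  · rintro ⟨_, x, y, z, hxy, hyz, g2, g1, hu⟩
    obtain ⟨i, j, k, rfl, rfl, rfl⟩ := lift3 x y z (by omega) (by omega) g1 g2
    have hm : ∀ a b c : Fin n, a < b → b < c → π a < π b → π b < π c → (a = i ∧ b = j ∧ c = k) := by
      intro a b c e1 e2 e3 e4
      rw [Fin.lt_def] at e1 e2
      have := hu a b c (by omega) (by omega) ((lt _ _).2 e3) ((lt _ _).2 e4)
      refine ⟨Fin.ext ?_, Fin.ext ?_, Fin.ext ?_⟩ <;> omega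
    refine ⟨⟨(i, j, k), ?_⟩, ?_, ?_⟩
    · ext ⟨a, b, c⟩
      simp only [Finset.mem_filter, Finset.mem_univ, true_and, Finset.mem_singleton, Prod.mk.injEq]
      constructor
      · rintro ⟨e1, e2, e3, e4⟩
        exact hm a b c e1 e2 e3 e4
      · rintro ⟨rfl, rfl, rfl⟩
        exact ⟨by rw [Fin.lt_def]; omega, by rw [Fin.lt_def]; omega, (lt _ _).1 g1, (lt _ _).1 g2⟩
    · rintro ⟨a, b, c⟩ _ ⟨e1, e2, e3, e4, e5⟩
      obtain ⟨rfl, rfl, rfl⟩ := hm a b c e1 e2 e4 e5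
      simp only at e3
      omega
    · rintro ⟨a, b, c⟩ _ ⟨e1, e2, e3, e4, e5⟩
      obtain ⟨rfl, rfl, rfl⟩ := hm a b c e1 e2 e4 e5
      simp only at e3
      omega

end Single123

/-- The number of permutations of length `n ≥ 5` with exactly one occurrence of
1-2-3, no occurrence of 1-23 and no occurrence of 12-3 is
`(8/(n+3)) * C(2n-3, n+2)`. -/
theorem single_123_no_adjacent_count (n : ℕ) (hn : 5 ≤ n) :
    ({π : Equiv.Perm (Fin n) | occ123 π = 1 ∧ occ1_23 π = 0 ∧ occ12_3 π = 0}.ncard : ℚ)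
      = (8 / (n + 3 : ℚ)) * (Nat.choose (2 * n - 3) (n + 2)) := by
  have e : Single123.Xs n = Single123.ext321 ''
      {π : Equiv.Perm (Fin n) | occ123 π = 1 ∧ occ1_23 π = 0 ∧ occ12_3 π = 0} := by
    ext σ
    constructor
    · intro h
      obtain ⟨π, rfl⟩ := Single123.ext321_surj σ h.1
      exact ⟨π, (Single123.mem_iff π).2 h, rfl⟩
    · rintro ⟨π, h, rfl⟩
      exact (Single123.mem_iff π).1 h
  rw [← Set.ncard_image_of_injective _ Single123.ext321_injective, ← e]
  obtain ⟨m, rfl⟩ : ∃ m, n = m + 5 := ⟨n - 5, by omega⟩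
  rw [Single123.Xs_final, show 2 * (m + 5) - 3 = 2 * m + 7 by omega]
  push_cast
  rw [show (m : ℚ) + 5 + 3 = m + 8 by ring]
end
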